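/- Let C ⊆ ℝⁿ be the convex polyhedron determined by vectors x*_1,…,x*_s ∈ ℝⁿ and scalars c_1,…,c_s, let x ∈ C, let u ∈ ℝ^d, let g : ℝⁿ×ℝ^d → ℝⁿ be continuously differentiable on a neighborhood of (x,u), let F(x,u) := N(x;C) + g(x,u), and let ω ∈ g(x,u) + N(x;C). Assume that the vectors {x*_j : j ∈ I(x)} are linearly independent. Then for every w ∈ ℝⁿ with D*N_C(x, ω − g(x,u))(w) ≠ ∅ one has the equality D*F((x,u),ω)(w) = {(∇ₓg(x,u)ᵀ w + Σ_{j∈I₀(w)∪I_>(w)} γ_j x*_j, ∇ᵤg(x,u)ᵀ w) : γ_j ∈ ℝ for j ∈ I₀(w), γ_j ≥ 0 for j ∈ I_>(w)}, while D*F((x,u),ω)(w) = ∅ for every w with D*N_C(x, ω − g(x,u))(w) = ∅; here I₀(w), I_>(w) are taken relative to the point x and ∇ₓg(x,u)ᵀ, ∇ᵤg(x,u)ᵀ denote the adjoints of the partial Jacobians of g at (x,u). -/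

import Mathlib

open Filter Topology Set MeasureTheory
open scoped RealInnerProductSpace

noncomputable section

/-- The limiting (Mordukhovich) normal cone to a set `Ω` at `z`. -/
def limNormal {E : Type*} [NormedAddCommGroup E] [NormedSpace ℝ E]
    (Ω : Set E) (z : E) : Set E :=
  {v | ∃ (zk vk : ℕ → E) (tk : ℕ → ℝ) (yk : ℕ → E),
      Tendsto zk atTop (𝓝 z) ∧ Tendsto vk atTop (𝓝 v) ∧
      (∀ k, 0 ≤ tk k) ∧ (∀ k, yk k ∈ Ω) ∧
      (∀ k, ‖zk k - yk k‖ = Metric.infDist (zk k) Ω) ∧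
      (∀ k, vk k = tk k • (zk k - yk k))}

/-- The convex normal cone to a convex set `C` at `x` (empty if `x ∉ C`). -/
def convNormal {E : Type*} [NormedAddCommGroup E] [InnerProductSpace ℝ E]
    (C : Set E) (x : E) : Set E :=
  {v | x ∈ C ∧ ∀ y ∈ C, ⟪v, y - x⟫ ≤ 0}

/-- Pairing of two components into the `L²` product. -/
def pmk {E F : Type*} [NormedAddCommGroup E] [NormedAddCommGroup F]
    (a : E) (b : F) : WithLp 2 (E × F) :=
  (WithLp.equiv 2 (E × F)).symm (a, b)

/-- First component of an `L²` product element. -/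
def pfst {E F : Type*} [NormedAddCommGroup E] [NormedAddCommGroup F]
    (q : WithLp 2 (E × F)) : E := ((WithLp.equiv 2 (E × F)) q).1

/-- Second component of an `L²` product element. -/
def psnd {E F : Type*} [NormedAddCommGroup E] [NormedAddCommGroup F]
    (q : WithLp 2 (E × F)) : F := ((WithLp.equiv 2 (E × F)) q).2

/-- The coderivative of a set-valued map `G` at `(z, y) ∈ gph G`, applied to `w`. -/
def coderiv {E F : Type*} [NormedAddCommGroup E] [NormedSpace ℝ E]
    [NormedAddCommGroup F] [NormedSpace ℝ F]
    (G : E → Set F) (z : E) (y : F) (w : F) : Set E :=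
  {v | pmk v (-w) ∈ limNormal {q : WithLp 2 (E × F) | psnd q ∈ G (pfst q)} (pmk z y)}

/-- The limiting subdifferential of `h : E → ℝ` at `z`, via limiting normals to the epigraph. -/
def limSubdiff {E : Type*} [NormedAddCommGroup E] [NormedSpace ℝ E]
    (h : E → ℝ) (z : E) : Set E :=
  {v | pmk v (-1 : ℝ) ∈ limNormal {q : WithLp 2 (E × ℝ) | h (pfst q) ≤ psnd q} (pmk z (h z))}
/-- `Euc n` is the Euclidean space `ℝⁿ`. -/
abbrev Euc (n : ℕ) := EuclideanSpace ℝ (Fin n)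

/-!
Every limiting normal to a closed set is a limit of `ε`-normals at nearby points of the set, with
`ε → 0`. In this form normals transform well: they pull back through a map with surjective strict
derivative, they pass through affine correspondences between graphs, and the normals to a product
are the products of normals.

Near `x` only the active constraints matter, so `C` may be replaced by the preimage, under
`A x = (⟪x*_j, x⟫)_j` with `j` active, of a product of half-lines. Linear independence makes `A`
surjective, whence `N_C = A† ∘ N_Q ∘ A` with `A†` injective, and `D*N_C = A† ∘ D*N_Q ∘ A`. The
coderivative of the normal cone map of `Q` splits into coordinates, where the graph of the normal
cone map of `(-∞, b]` is two half-lines meeting at a right angle. At multiplier `ν ≥ 0` and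
direction `t`, its coderivative is empty if `ν > 0` and `t ≠ 0`. Otherwise it is all of `ℝ` for
`t = 0`, `[0, ∞)` for `t > 0` and `{0}` for `t < 0`, independently of `ν`. Finally, the graph of
`F` is the preimage of the graph of `N_C` under `(y, v, ω) ↦ (y, ω - g (y, v))`, which adds the
terms `∇g† w`.
-/

theorem tendsto_add_smul_nhdsGT {E : Type*} [AddCommGroup E] [Module ℝ E] [TopologicalSpace E]
    [ContinuousAdd E] [ContinuousSMul ℝ E] (z w : E) :
    Tendsto (fun τ : ℝ => z + τ • w) (𝓝[>] 0) (𝓝 z) := by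
  have hcont : Continuous fun τ : ℝ => z + τ • w := by fun_prop
  simpa using (hcont.tendsto 0).mono_left nhdsWithin_le_nhds

section LimitingFrechetNormals

variable {E : Type*} [NormedAddCommGroup E] [InnerProductSpace ℝ E]
  {Ω Ω' : Set E} {y z v w : E} {ε ε' : ℝ}

/-- The `ε`-normals to `Ω` at `y`: vectors which are Fréchet normals up to a first-order error
of size `ε`. -/
def epsNormal (ε : ℝ) (Ω : Set E) (y : E) : Set E :=
  {v | ∀ᶠ q in 𝓝[Ω] y, ⟪v, q - y⟫ ≤ ε * ‖q - y‖}

/-- The vectors which, for every `ε > 0`, are `ε`-normals to `Ω` at points of `Ω` arbitrarily close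
to `z`. For locally closed sets in finite dimension this is the limiting normal cone; unlike
the definition through projections, it does not refer to the distance to `Ω`. The vector is kept
fixed, since a small change of it is absorbed by `ε`. -/
def limFrechetNormal (Ω : Set E) (z : E) : Set E :=
  {v | ∀ ε > 0, ∃ᶠ y in 𝓝[Ω] z, v ∈ epsNormal ε Ω y}

theorem epsNormal_mono (h : ε ≤ ε') : epsNormal ε Ω y ⊆ epsNormal ε' Ω y :=
  fun v (hv : ∀ᶠ q in 𝓝[Ω] y, ⟪v, q - y⟫ ≤ ε * ‖q - y‖) =>
    hv.mono fun q hq => hq.trans (by gcongr)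

theorem epsNormal_congr (h : Ω =ᶠ[𝓝 y] Ω') : epsNormal ε Ω y = epsNormal ε Ω' y := by
  simp only [epsNormal, nhdsWithin_eq_iff_eventuallyEq.2 h]

theorem limFrechetNormal_congr (h : Ω =ᶠ[𝓝 z] Ω') :
    limFrechetNormal Ω z = limFrechetNormal Ω' z := by
  have hev : ∀ᶠ y in 𝓝[Ω] z, Ω =ᶠ[𝓝 y] Ω' := nhdsWithin_le_nhds (eventually_eventually_nhds.2 h)
  ext v
  refine forall₂_congr fun ε _ => ?_
  rw [← nhdsWithin_eq_iff_eventuallyEq.2 h]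
  exact frequently_congr (hev.mono fun y hy => by rw [epsNormal_congr hy])

theorem mem_limFrechetNormal_of_tendsto {κ : Type*} {l : Filter κ} [l.NeBot] {c : κ → E}
    (hc : Tendsto c l (𝓝 z)) (hΩ : ∀ᶠ k in l, c k ∈ Ω) (h : ∀ᶠ k in l, v ∈ epsNormal 0 Ω (c k)) :
    v ∈ limFrechetNormal Ω z := fun _ hε =>
  (tendsto_nhdsWithin_iff.2 ⟨hc, hΩ⟩).frequently
    (h.mono fun _ hk => epsNormal_mono hε.le hk).frequently

theorem mem_limFrechetNormal_of_const_mul (K : ℝ)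
    (h : ∀ ε > 0, ∃ᶠ y in 𝓝[Ω] z, v ∈ epsNormal (K * ε) Ω y) : v ∈ limFrechetNormal Ω z := by
  intro ε hε
  refine (h (ε / (|K| + 1)) (by positivity)).mono fun y hy => epsNormal_mono ?_ hy
  rw [mul_div_assoc', div_le_iff₀ (by positivity)]
  nlinarith [le_abs_self K]

theorem inner_le_of_mem_epsNormal_of_ray (hv : v ∈ epsNormal ε Ω y)
    (h : ∀ᶠ τ in 𝓝[>] (0 : ℝ), y + τ • w ∈ Ω) : ⟪v, w⟫ ≤ ε * ‖w‖ := by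
  have hlim : Tendsto (fun τ : ℝ => y + τ • w) (𝓝[>] 0) (𝓝[Ω] y) :=
    tendsto_nhdsWithin_iff.2 ⟨tendsto_add_smul_nhdsGT y w, h⟩
  obtain ⟨τ, hτ, hpos⟩ := ((hlim.eventually hv).and self_mem_nhdsWithin).exists
  have hpos : 0 < τ := hpos
  rw [add_sub_cancel_left, real_inner_smul_right, norm_smul, Real.norm_of_nonneg hpos.le] at hτ
  nlinarith

theorem inner_nonpos_of_mem_limFrechetNormal (hv : v ∈ limFrechetNormal Ω z)
    (h : ∀ᶠ y in 𝓝[Ω] z, ∀ᶠ τ in 𝓝[>] (0 : ℝ), y + τ • w ∈ Ω) : ⟪v, w⟫ ≤ 0 := by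
  refine le_of_forall_pos_le_add fun δ hδ => ?_
  obtain ⟨y, hvy, hy⟩ := ((hv (δ / (‖w‖ + 1)) (by positivity)).and_eventually h).exists
  refine (inner_le_of_mem_epsNormal_of_ray hvy hy).trans ?_
  rw [zero_add, div_mul_eq_mul_div, div_le_iff₀ (by positivity)]
  linarith

variable {Z : Type*} [NormedAddCommGroup Z] [InnerProductSpace ℝ Z] {Θ : Set Z} {u p : Z}

theorem mem_epsNormal_of_affine (hε : 0 ≤ ε) (hv : v ∈ epsNormal ε Ω y) (L : Z →L[ℝ] E)
    (hL : ∀ q ∈ Θ, y + L (q - p) ∈ Ω) (hu : ∀ q ∈ Θ, ⟪u, q - p⟫ = ⟪v, L (q - p)⟫) :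
    u ∈ epsNormal (ε * ‖L‖) Θ p := by
  have hlim : Tendsto (fun q => y + L (q - p)) (𝓝[Θ] p) (𝓝[Ω] y) := by
    refine tendsto_nhdsWithin_iff.2 ⟨?_, eventually_mem_nhdsWithin.mono hL⟩
    have hcont : Continuous fun q => y + L (q - p) := by fun_prop
    simpa using (hcont.tendsto p).mono_left nhdsWithin_le_nhds
  filter_upwards [hlim.eventually hv, self_mem_nhdsWithin] with q hq hqΘ
  rw [add_sub_cancel_left] at hq
  calc ⟪u, q - p⟫ = ⟪v, L (q - p)⟫ := hu q hqΘ
    _ ≤ ε * ‖L (q - p)‖ := hq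
    _ ≤ ε * (‖L‖ * ‖q - p‖) := by gcongr; exact L.le_opNorm _
    _ = ε * ‖L‖ * ‖q - p‖ := (mul_assoc _ _ _).symm

theorem mem_limFrechetNormal_of_affine (hv : v ∈ limFrechetNormal Ω z) {σ : E → Z}
    (hσ : Tendsto σ (𝓝[Ω] z) (𝓝[Θ] p)) (L : Z →L[ℝ] E)
    (hL : ∀ y ∈ Ω, ∀ q ∈ Θ, y + L (q - σ y) ∈ Ω)
    (hu : ∀ y ∈ Ω, ∀ q ∈ Θ, ⟪u, q - σ y⟫ = ⟪v, L (q - σ y)⟫) : u ∈ limFrechetNormal Θ p := by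
  refine mem_limFrechetNormal_of_const_mul ‖L‖ fun ε hε => hσ.frequently ?_
  refine ((hv ε hε).and_eventually eventually_mem_nhdsWithin).mono fun y ⟨hvy, hy⟩ => ?_
  rw [mul_comm]
  exact mem_epsNormal_of_affine hε.le hvy L (hL y hy) (hu y hy)

end LimitingFrechetNormals

section Projections

variable {E : Type*} [NormedAddCommGroup E] {Ω : Set E} {y z : E}

theorem tendsto_of_norm_sub_eq_infDist (hz : z ∈ Ω) {zk yk : ℕ → E}
    (hzk : Tendsto zk atTop (𝓝 z)) (h : ∀ k, ‖zk k - yk k‖ = Metric.infDist (zk k) Ω) :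
    Tendsto yk atTop (𝓝 z) := by
  have hdiff : Tendsto (fun k => zk k - yk k) atTop (𝓝 0) := by
    refine squeeze_zero_norm (fun k => ?_) (tendsto_iff_norm_sub_tendsto_zero.1 hzk)
    rw [h k, ← dist_eq_norm]
    exact Metric.infDist_le_dist_of_mem hz
  simpa using hzk.sub hdiff

theorem eventually_exists_norm_sub_eq_infDist [ProperSpace E] (hz : z ∈ Ω) {s : Set E}
    (hs : s ∈ 𝓝 z) (hcl : IsClosed (Ω ∩ s)) :
    ∀ᶠ p in 𝓝 z, ∃ q ∈ Ω, ‖p - q‖ = Metric.infDist p Ω := by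
  obtain ⟨r, hr, hrs⟩ := Metric.nhds_basis_closedBall.mem_iff.1 hs
  have hcompact : IsCompact (Ω ∩ s ∩ Metric.closedBall z r) :=
    (isCompact_closedBall z r).inter_left hcl
  have hzK : z ∈ Ω ∩ s ∩ Metric.closedBall z r :=
    ⟨⟨hz, mem_of_mem_nhds hs⟩, Metric.mem_closedBall_self hr.le⟩
  filter_upwards [Metric.ball_mem_nhds z (half_pos hr)] with p hp
  obtain ⟨q, hqK, hq⟩ := hcompact.exists_infDist_eq_dist ⟨z, hzK⟩ p
  refine ⟨q, hqK.1.1, ?_⟩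
  rw [← dist_eq_norm]
  refine le_antisymm ((Metric.le_infDist ⟨z, hz⟩).2 fun {p'} hp' => ?_)
    (Metric.infDist_le_dist_of_mem hqK.1.1)
  rw [← hq]
  by_cases hfar : p' ∈ Metric.closedBall z r
  · exact Metric.infDist_le_dist_of_mem ⟨⟨hp', hrs hfar⟩, hfar⟩
  · have hpz := Metric.infDist_le_dist_of_mem (x := p) hzK
    rw [Metric.mem_closedBall, not_le] at hfar
    rw [Metric.mem_ball] at hp
    linarith [dist_triangle_left p' z p]

end Projections

section ProximalCharacterization

variable {E : Type*} [NormedAddCommGroup E] [InnerProductSpace ℝ E]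
  {Ω : Set E} {p q y z v : E} {ε : ℝ}

theorem two_mul_inner_le_of_norm_sub_eq_infDist (hq : ‖p - q‖ = Metric.infDist p Ω)
    (hy : y ∈ Ω) : 2 * ⟪p - q, y - q⟫ ≤ ‖y - q‖ ^ 2 := by
  have hle : ‖p - q‖ ≤ ‖p - y‖ := by
    rw [hq, ← dist_eq_norm]
    exact Metric.infDist_le_dist_of_mem hy
  have hexp : ‖p - y‖ ^ 2 = ‖p - q‖ ^ 2 - 2 * ⟪p - q, y - q⟫ + ‖y - q‖ ^ 2 := by
    rw [← norm_sub_sq_real, sub_sub_sub_cancel_right]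
  linarith [pow_le_pow_left₀ (norm_nonneg _) hle 2]

theorem norm_sub_sq_le_of_norm_sub_eq_infDist (hq : ‖p - q‖ = Metric.infDist p Ω)
    (hy : y ∈ Ω) : ‖q - y‖ ^ 2 ≤ 2 * ⟪p - y, q - y⟫ := by
  have hprox := two_mul_inner_le_of_norm_sub_eq_infDist hq hy
  have hsplit : ⟪p - q, y - q⟫ = ‖q - y‖ ^ 2 - ⟪p - y, q - y⟫ := by
    rw [← neg_sub q y, inner_neg_right, ← sub_sub_sub_cancel_right p q y, inner_sub_left,
      real_inner_self_eq_norm_sq, neg_sub]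
  rw [hsplit, norm_sub_rev y q] at hprox
  linarith

theorem mem_epsNormal_of_norm_sub_eq_infDist (hq : ‖p - q‖ = Metric.infDist p Ω) {t : ℝ}
    (ht : 0 ≤ t) (hε : 0 < ε) (hv : ‖v - t • (p - q)‖ ≤ ε / 2) : v ∈ epsNormal ε Ω q := by
  have hsmall : ∀ᶠ y in 𝓝[Ω] q, t * ‖y - q‖ ≤ ε := by
    have hcont : Continuous fun y => t * ‖y - q‖ := by fun_prop
    have hlim : Tendsto (fun y => t * ‖y - q‖) (𝓝 q) (𝓝 0) := by simpa using hcont.tendsto q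
    exact nhdsWithin_le_nhds (hlim.eventually_le_const hε)
  filter_upwards [hsmall, self_mem_nhdsWithin] with y hty hy
  have hprox := two_mul_inner_le_of_norm_sub_eq_infDist hq hy
  calc ⟪v, y - q⟫ = t * ⟪p - q, y - q⟫ + ⟪v - t • (p - q), y - q⟫ := by
        rw [← real_inner_smul_left, ← inner_add_left, add_sub_cancel]
    _ ≤ t * (‖y - q‖ ^ 2 / 2) + ε / 2 * ‖y - q‖ := by
        gcongr
        · linarith
        · exact (real_inner_le_norm _ _).trans (by gcongr)
    _ ≤ ε * ‖y - q‖ := by nlinarith [mul_le_mul_of_nonneg_right hty (norm_nonneg (y - q))]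

theorem limNormal_subset_limFrechetNormal (hz : z ∈ Ω) :
    limNormal Ω z ⊆ limFrechetNormal Ω z := by
  rintro v ⟨zk, vk, tk, yk, hzk, hvk, htk, hyk, hdist, hvt⟩ ε hε
  have hyz : Tendsto yk atTop (𝓝[Ω] z) := tendsto_nhdsWithin_iff.2
    ⟨tendsto_of_norm_sub_eq_infDist hz hzk hdist, Eventually.of_forall hyk⟩
  have hvk' : ∀ᶠ k in atTop, ‖v - vk k‖ ≤ ε / 2 :=
    (tendsto_iff_norm_sub_tendsto_zero.1 hvk).eventually_le_const (half_pos hε) |>.mono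
      fun k hk => by rwa [norm_sub_rev]
  refine hyz.frequently (Eventually.frequently (hvk'.mono fun k hk => ?_))
  exact mem_epsNormal_of_norm_sub_eq_infDist (hdist k) (htk k) hε (by rwa [← hvt k])

-- Projecting `y + τ • v` onto `Ω` moves the foot point `y` by `O(ε τ)` only, so that the
-- difference quotient of the projection recovers `v` up to `O(ε)`.
theorem eventually_norm_sub_le_of_mem_epsNormal (hy : y ∈ Ω) (hε : 0 ≤ ε)
    (hv : v ∈ epsNormal ε Ω y) :
    ∀ᶠ τ in 𝓝[>] (0 : ℝ), ∀ q ∈ Ω, ‖y + τ • v - q‖ = Metric.infDist (y + τ • v) Ω →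
      ‖q - y‖ ≤ 2 * ε * τ := by
  obtain ⟨r, hr, hball⟩ := Metric.mem_nhdsWithin_iff.1 hv
  have hcont : Continuous fun τ : ℝ => 2 * ‖τ • v‖ := by fun_prop
  have hlim : Tendsto (fun τ : ℝ => 2 * ‖τ • v‖) (𝓝 0) (𝓝 0) := by simpa using hcont.tendsto 0
  filter_upwards [nhdsWithin_le_nhds (hlim.eventually_lt_const hr), self_mem_nhdsWithin]
    with τ hτr (hτ : 0 < τ) q hq hdist
  have hsq := norm_sub_sq_le_of_norm_sub_eq_infDist hdist hy
  rw [add_sub_cancel_left] at hsq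
  have hcoarse : ‖q - y‖ ≤ 2 * ‖τ • v‖ := by
    by_contra! hlt
    nlinarith [real_inner_le_norm (τ • v) (q - y), norm_nonneg (τ • v)]
  have hnormal : ⟪v, q - y⟫ ≤ ε * ‖q - y‖ :=
    hball ⟨mem_ball_iff_norm.2 (hcoarse.trans_lt hτr), hq⟩
  rw [real_inner_smul_left] at hsq
  by_contra! hlt
  nlinarith [mul_le_mul_of_nonneg_left hnormal hτ.le, mul_nonneg hε hτ.le]

theorem exists_projection_of_mem_epsNormal (hy : y ∈ Ω) (hε : 0 < ε)
    (hv : v ∈ epsNormal ε Ω y)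
    (hproj : ∀ᶠ p in 𝓝 y, ∃ q ∈ Ω, ‖p - q‖ = Metric.infDist p Ω) :
    ∃ p q : E, ∃ t : ℝ, ‖p - y‖ < ε ∧ 0 ≤ t ∧ q ∈ Ω ∧ ‖p - q‖ = Metric.infDist p Ω ∧
      ‖t • (p - q) - v‖ ≤ 2 * ε := by
  have hlim := tendsto_add_smul_nhdsGT y v
  obtain ⟨τ, hclose, ⟨q, hq, hdist⟩, hest, hτ⟩ :=
    ((hlim.eventually (Metric.ball_mem_nhds y hε)).and ((hlim.eventually hproj).and
      ((eventually_norm_sub_le_of_mem_epsNormal hy hε.le hv).and self_mem_nhdsWithin))).exists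
  have hτ : 0 < τ := hτ
  refine ⟨y + τ • v, q, τ⁻¹, mem_ball_iff_norm.1 hclose, by positivity, hq, hdist, ?_⟩
  have hquot : τ⁻¹ • (y + τ • v - q) - v = -(τ⁻¹ • (q - y)) := by
    rw [add_sub_right_comm, smul_add, inv_smul_smul₀ hτ.ne', add_sub_cancel_right, ← smul_neg,
      neg_sub]
  rw [hquot, norm_neg, norm_smul, norm_inv, Real.norm_of_nonneg hτ.le, inv_mul_le_iff₀ hτ,
    mul_comm]
  exact hest q hq hdist

theorem limNormal_eq_limFrechetNormal [ProperSpace E] (hz : z ∈ Ω) {s : Set E} (hs : s ∈ 𝓝 z)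
    (hcl : IsClosed (Ω ∩ s)) : limNormal Ω z = limFrechetNormal Ω z := by
  refine (limNormal_subset_limFrechetNormal hz).antisymm fun v hv => ?_
  have happrox (k : ℕ) : ∃ p q : E, ∃ t : ℝ, ‖p - z‖ ≤ 2 * (1 / ((k : ℝ) + 1)) ∧ 0 ≤ t ∧ q ∈ Ω ∧
      ‖p - q‖ = Metric.infDist p Ω ∧ ‖t • (p - q) - v‖ ≤ 2 * (1 / ((k : ℝ) + 1)) := by
    have hk : (0 : ℝ) < 1 / ((k : ℝ) + 1) := by positivity
    have hnear : ∀ᶠ y in 𝓝[Ω] z, (∀ᶠ p in 𝓝 y, ∃ q ∈ Ω, ‖p - q‖ = Metric.infDist p Ω) ∧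
        y ∈ Metric.ball z (1 / ((k : ℝ) + 1)) :=
      nhdsWithin_le_nhds ((eventually_eventually_nhds.2
        (eventually_exists_norm_sub_eq_infDist hz hs hcl)).and (Metric.ball_mem_nhds z hk))
    obtain ⟨y, hvy, ⟨hproj, hyz⟩, hy⟩ :=
      ((hv _ hk).and_eventually (hnear.and eventually_mem_nhdsWithin)).exists
    obtain ⟨p, q, t, hpy, ht, hq, hdist, hvt⟩ := exists_projection_of_mem_epsNormal hy hk hvy hproj
    refine ⟨p, q, t, ?_, ht, hq, hdist, hvt⟩
    linarith [norm_sub_le_norm_sub_add_norm_sub p y z, mem_ball_iff_norm.1 hyz]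
  choose p q t hpz ht hq hdist hvt using happrox
  have hzero : Tendsto (fun k : ℕ => 2 * (1 / ((k : ℝ) + 1))) atTop (𝓝 0) := by
    simpa using tendsto_one_div_add_atTop_nhds_zero_nat.const_mul (2 : ℝ)
  refine ⟨p, fun k => t k • (p k - q k), t, q, ?_, ?_, ht, hq, hdist, fun _ => rfl⟩
  · exact tendsto_iff_norm_sub_tendsto_zero.2
      (squeeze_zero (fun _ => norm_nonneg _) hpz hzero)
  · exact tendsto_iff_norm_sub_tendsto_zero.2
      (squeeze_zero (fun _ => norm_nonneg _) hvt hzero)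

end ProximalCharacterization

section RightInverse

variable {E F : Type*} [NormedAddCommGroup E] [InnerProductSpace ℝ E] [CompleteSpace E]
  [NormedAddCommGroup F] [InnerProductSpace ℝ F] [CompleteSpace F]
  {B : E →L[ℝ] F} {R : F →L[ℝ] E}

theorem adjoint_rightInverse_adjoint (hR : Function.RightInverse R B) (b : F) :
    R.adjoint (B.adjoint b) = b := by
  refine ext_inner_right ℝ fun d => ?_
  rw [R.adjoint_inner_left, B.adjoint_inner_left, hR d]

theorem adjoint_adjoint_rightInverse (hR : Function.RightInverse R B) {v : E}
    (hv : ∀ d, B d = 0 → ⟪v, d⟫ = 0) : B.adjoint (R.adjoint v) = v := by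
  refine ext_inner_right ℝ fun d => ?_
  have hker := hv (d - R (B d)) (by rw [map_sub, hR, sub_self])
  rw [inner_sub_right, sub_eq_zero] at hker
  rw [B.adjoint_inner_left, R.adjoint_inner_left, hker]

theorem exists_continuousLinearMap_rightInverse {E F : Type*} [NormedAddCommGroup E]
    [NormedSpace ℝ E] [NormedAddCommGroup F] [NormedSpace ℝ F] [FiniteDimensional ℝ F]
    {B : E →L[ℝ] F} (hB : B.range = ⊤) : ∃ R : F →L[ℝ] E, Function.RightInverse R B :=
  (B.exists_rightInverse_of_surjective hB).imp fun _ hR q => congrArg (· q) hR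

end RightInverse

section Preimage

variable {E F : Type*} [NormedAddCommGroup E] [InnerProductSpace ℝ E] [NormedAddCommGroup F]
  [InnerProductSpace ℝ F] {Ψ : E → F} {B : E →L[ℝ] F} {Ω : Set F} {s : Set E} {y z v : E}
  {N : F} {c : NNReal} {ε η : ℝ}

theorem adjoint_mem_epsNormal_preimage [CompleteSpace E] [CompleteSpace F]
    (hΨ : ApproximatesLinearOn Ψ B s c) (hs : s ∈ 𝓝 y) (hε : 0 ≤ ε)
    (hN : N ∈ epsNormal ε Ω (Ψ y)) :
    B.adjoint N ∈ epsNormal (ε * (‖B‖ + c) + c * ‖N‖) (Ψ ⁻¹' Ω) y := by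
  have hlim : Tendsto Ψ (𝓝[Ψ ⁻¹' Ω] y) (𝓝[Ω] (Ψ y)) :=
    (hΨ.continuousOn.continuousAt hs).continuousWithinAt.tendsto_nhdsWithin (mapsTo_preimage Ψ Ω)
  filter_upwards [hlim.eventually hN, nhdsWithin_le_nhds hs] with q hq hqs
  have herr := hΨ q hqs y (mem_of_mem_nhds hs)
  have hlip : ‖Ψ q - Ψ y‖ ≤ (‖B‖ + c) * ‖q - y‖ := by
    have hsplit := norm_le_insert' (Ψ q - Ψ y) (B (q - y))
    linarith [B.le_opNorm (q - y)]
  calc ⟪B.adjoint N, q - y⟫ = ⟪N, Ψ q - Ψ y⟫ - ⟪N, Ψ q - Ψ y - B (q - y)⟫ := by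
        rw [B.adjoint_inner_left, ← inner_sub_right, sub_sub_cancel]
    _ ≤ ε * ‖Ψ q - Ψ y‖ + ‖N‖ * ‖Ψ q - Ψ y - B (q - y)‖ := by
        linarith [neg_le_of_abs_le (abs_real_inner_le_norm N (Ψ q - Ψ y - B (q - y)))]
    _ ≤ ε * ((‖B‖ + c) * ‖q - y‖) + ‖N‖ * (c * ‖q - y‖) := by gcongr
    _ = (ε * (‖B‖ + c) + c * ‖N‖) * ‖q - y‖ := by ring

theorem eventually_exists_apply_eq_add [CompleteSpace E] (hΨ : ApproximatesLinearOn Ψ B s c)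
    (hs : s ∈ 𝓝 y) (R : B.NonlinearRightInverse) (hη : 0 ≤ η)
    (hc : c ≤ ((R.nnnorm : ℝ)⁻¹ - c) * η) :
    ∀ᶠ e in 𝓝 (0 : E), ∃ q, Ψ q = Ψ y + B e ∧ ‖q - (y + e)‖ ≤ η * ‖e‖ := by
  obtain ⟨r, hr, hrs⟩ := Metric.nhds_basis_closedBall.mem_iff.1 hs
  have hcont : Continuous fun e : E => (η + 1) * ‖e‖ := by fun_prop
  have hlim : Tendsto (fun e : E => (η + 1) * ‖e‖) (𝓝 0) (𝓝 0) := by simpa using hcont.tendsto 0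
  filter_upwards [hlim.eventually_le_const hr] with e he
  have hball : Metric.closedBall (y + e) (η * ‖e‖) ⊆ s := by
    refine (Metric.closedBall_subset_closedBall' ?_).trans hrs
    rw [dist_eq_norm, add_sub_cancel_left]
    linarith
  have hye : y + e ∈ s := hball (Metric.mem_closedBall_self (by positivity))
  have herr := hΨ (y + e) hye y (mem_of_mem_nhds hs)
  rw [add_sub_cancel_left] at herr
  have htarget : Ψ y + B e ∈
      Metric.closedBall (Ψ (y + e)) (((R.nnnorm : ℝ)⁻¹ - c) * (η * ‖e‖)) := by
    rw [mem_closedBall_iff_norm, norm_sub_rev, ← sub_sub, ← mul_assoc]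
    exact herr.trans (by gcongr)
  obtain ⟨q, hq, hqΨ⟩ := hΨ.surjOn_closedBall_of_nonlinearRightInverse R (by positivity) hball
    htarget
  exact ⟨q, hqΨ, mem_closedBall_iff_norm.1 hq⟩

theorem mem_epsNormal_linearization (hε : 0 ≤ ε)
    (hsolve : ∀ᶠ e in 𝓝 (0 : E), ∃ q, Ψ q = Ψ y + B e ∧ ‖q - (y + e)‖ ≤ η * ‖e‖)
    (hv : v ∈ epsNormal ε (Ψ ⁻¹' Ω) y) :
    v ∈ epsNormal (ε * (1 + η) + η * ‖v‖) {q | Ψ y + B (q - y) ∈ Ω} y := by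
  obtain ⟨r, hr, hball⟩ := Metric.mem_nhdsWithin_iff.1 hv
  have hshift : Tendsto (fun p => p - y) (𝓝 y) (𝓝 0) := by
    simpa using (continuous_sub_right y).tendsto y
  have hcont : Continuous fun p => (1 + η) * ‖p - y‖ := by fun_prop
  have hlim : Tendsto (fun p => (1 + η) * ‖p - y‖) (𝓝 y) (𝓝 0) := by simpa using hcont.tendsto y
  filter_upwards [nhdsWithin_le_nhds (hshift.eventually hsolve), self_mem_nhdsWithin,
    nhdsWithin_le_nhds (hlim.eventually_lt_const hr)] with p ⟨q, hqΨ, hqp⟩ hp hpr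
  rw [add_sub_cancel] at hqp
  have hqy : ‖q - y‖ ≤ (1 + η) * ‖p - y‖ := by
    linarith [norm_sub_le_norm_sub_add_norm_sub q p y]
  have hq : q ∈ Ψ ⁻¹' Ω := by rw [mem_preimage, hqΨ]; exact hp
  have hnormal : ⟪v, q - y⟫ ≤ ε * ‖q - y‖ := hball ⟨mem_ball_iff_norm.2 (hqy.trans_lt hpr), hq⟩
  calc ⟪v, p - y⟫ = ⟪v, q - y⟫ - ⟪v, q - p⟫ := by rw [← inner_sub_right, sub_sub_sub_cancel_left]
    _ ≤ ε * ‖q - y‖ + ‖v‖ * ‖q - p‖ := by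
        linarith [neg_le_of_abs_le (abs_real_inner_le_norm v (q - p))]
    _ ≤ ε * ((1 + η) * ‖p - y‖) + ‖v‖ * (η * ‖p - y‖) := by gcongr
    _ = (ε * (1 + η) + η * ‖v‖) * ‖p - y‖ := by ring

theorem frequently_mem_epsNormal_linearization [CompleteSpace E] [CompleteSpace F]
    (hΨ : HasStrictFDerivAt Ψ B z) (hB : B.range = ⊤) (hv : v ∈ limFrechetNormal (Ψ ⁻¹' Ω) z)
    (hε : 0 < ε) :
    ∃ᶠ y in 𝓝[Ψ ⁻¹' Ω] z, v ∈ epsNormal ε {q | Ψ y + B (q - y) ∈ Ω} y := by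
  have hR := B.nonlinearRightInverseOfSurjective_nnnorm_pos hB
  set R := B.nonlinearRightInverseOfSurjective hB
  obtain ⟨η, hη, hη1, hηv⟩ : ∃ η : ℝ, 0 < η ∧ η ≤ 1 ∧ η * ‖v‖ ≤ ε / 2 := by
    refine ⟨ε / (ε + 2 * ‖v‖), by positivity, ?_, ?_⟩
    · exact div_le_one_of_le₀ (by linarith [norm_nonneg v]) (by positivity)
    · rw [div_mul_eq_mul_div, div_le_iff₀ (by positivity)]
      nlinarith
  lift η to NNReal using hη.le
  have hc : 0 < R.nnnorm⁻¹ * η / 2 := by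
    have := NNReal.coe_pos.1 hη
    positivity
  obtain ⟨s, hs, hΨs⟩ := hΨ.approximates_deriv_on_nhds (Or.inr hc)
  have hnear : ∀ᶠ y in 𝓝[Ψ ⁻¹' Ω] z, s ∈ 𝓝 y :=
    nhdsWithin_le_nhds (eventually_mem_nhds_iff.2 hs)
  refine ((hv (ε / 4) (by positivity)).and_eventually hnear).mono fun y ⟨hvy, hsy⟩ => ?_
  have hrate : ((R.nnnorm⁻¹ * η / 2 : NNReal) : ℝ) ≤
      ((R.nnnorm : ℝ)⁻¹ - (R.nnnorm⁻¹ * η / 2 : NNReal)) * η := by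
    push_cast
    nlinarith [mul_nonneg (inv_nonneg.2 R.nnnorm.2) hη.le]
  refine epsNormal_mono ?_ (mem_epsNormal_linearization (by positivity)
    (eventually_exists_apply_eq_add hΨs hsy R hη.le hrate) hvy)
  nlinarith

theorem inner_eq_zero_of_mem_limFrechetNormal_preimage [CompleteSpace E] [CompleteSpace F]
    (hΨ : HasStrictFDerivAt Ψ B z) (hB : B.range = ⊤) (hv : v ∈ limFrechetNormal (Ψ ⁻¹' Ω) z)
    {k : E} (hk : B k = 0) : ⟪v, k⟫ = 0 := by
  have hle {k : E} (hk : B k = 0) : ⟪v, k⟫ ≤ 0 := by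
    refine le_of_forall_pos_le_add fun δ hδ => ?_
    obtain ⟨y, hvy, hy⟩ := ((frequently_mem_epsNormal_linearization hΨ hB hv
      (ε := δ / (‖k‖ + 1)) (by positivity)).and_eventually eventually_mem_nhdsWithin).exists
    refine (inner_le_of_mem_epsNormal_of_ray hvy (Eventually.of_forall fun τ => ?_)).trans ?_
    · simpa [hk] using hy
    · rw [zero_add, div_mul_eq_mul_div, div_le_iff₀ (by positivity)]
      linarith
  refine le_antisymm (hle hk) ?_
  have hneg := hle (k := -k) (by rw [map_neg, hk, neg_zero])
  rwa [inner_neg_right, neg_nonpos] at hneg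

theorem limFrechetNormal_preimage_subset [CompleteSpace E] [FiniteDimensional ℝ F]
    (hΨ : HasStrictFDerivAt Ψ B z) (hB : B.range = ⊤) :
    limFrechetNormal (Ψ ⁻¹' Ω) z ⊆ B.adjoint '' limFrechetNormal Ω (Ψ z) := by
  intro v hv
  obtain ⟨R, hR⟩ := exists_continuousLinearMap_rightInverse hB
  refine ⟨R.adjoint v, mem_limFrechetNormal_of_const_mul ‖R‖ fun ε hε => ?_,
    adjoint_adjoint_rightInverse hR fun d hd =>
      inner_eq_zero_of_mem_limFrechetNormal_preimage hΨ hB hv hd⟩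
  have hlim : Tendsto Ψ (𝓝[Ψ ⁻¹' Ω] z) (𝓝[Ω] (Ψ z)) :=
    hΨ.continuousAt.continuousWithinAt.tendsto_nhdsWithin (mapsTo_preimage Ψ Ω)
  refine hlim.frequently ((frequently_mem_epsNormal_linearization hΨ hB hv hε).mono
    fun y hvy => ?_)
  rw [mul_comm]
  refine mem_epsNormal_of_affine hε.le hvy R (fun q hq => ?_) fun q _ => R.adjoint_inner_left _ v
  simpa [hR _] using hq

theorem adjoint_mem_limFrechetNormal_preimage [CompleteSpace E] [CompleteSpace F]
    (hΨ : HasStrictFDerivAt Ψ B z) (hB : B.range = ⊤) (hN : N ∈ limFrechetNormal Ω (Ψ z)) :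
    B.adjoint N ∈ limFrechetNormal (Ψ ⁻¹' Ω) z := by
  have hmap : map Ψ (𝓝[Ψ ⁻¹' Ω] z) = 𝓝[Ω] (Ψ z) := by
    rw [nhdsWithin, map_inf_principal_preimage, hΨ.map_nhds_eq_of_surj hB, nhdsWithin]
  refine mem_limFrechetNormal_of_const_mul (‖B‖ + 1 + ‖N‖) fun ε hε => ?_
  have hfreq : ∃ᶠ y in 𝓝[Ψ ⁻¹' Ω] z, N ∈ epsNormal ε Ω (Ψ y) := by
    have := hN ε hε
    rwa [← hmap, frequently_map] at this
  have hc : 0 < min ε.toNNReal 1 := lt_min (Real.toNNReal_pos.2 hε) one_pos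
  obtain ⟨s, hs, hΨs⟩ := hΨ.approximates_deriv_on_nhds (Or.inr hc)
  have hnear : ∀ᶠ y in 𝓝[Ψ ⁻¹' Ω] z, s ∈ 𝓝 y :=
    nhdsWithin_le_nhds (eventually_mem_nhds_iff.2 hs)
  refine (hfreq.and_eventually hnear).mono fun y ⟨hNy, hsy⟩ => ?_
  refine epsNormal_mono ?_ (adjoint_mem_epsNormal_preimage hΨs hsy hε.le hNy)
  have hcε : ((min ε.toNNReal 1 : NNReal) : ℝ) ≤ ε := by simp [hε.le]
  have hc1 : ((min ε.toNNReal 1 : NNReal) : ℝ) ≤ 1 := by simp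
  calc _ ≤ ε * (‖B‖ + 1) + ε * ‖N‖ := by gcongr
    _ = (‖B‖ + 1 + ‖N‖) * ε := by ring

theorem limFrechetNormal_preimage [CompleteSpace E] [FiniteDimensional ℝ F]
    (hΨ : HasStrictFDerivAt Ψ B z) (hB : B.range = ⊤) :
    limFrechetNormal (Ψ ⁻¹' Ω) z = B.adjoint '' limFrechetNormal Ω (Ψ z) :=
  (limFrechetNormal_preimage_subset hΨ hB).antisymm
    (image_subset_iff.2 fun _ hN => adjoint_mem_limFrechetNormal_preimage hΨ hB hN)

theorem limNormal_preimage [FiniteDimensional ℝ E] [FiniteDimensional ℝ F]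
    (hΨ : HasStrictFDerivAt Ψ B z) (hB : B.range = ⊤) (hΩ : IsClosed Ω) (hz : Ψ z ∈ Ω) :
    limNormal (Ψ ⁻¹' Ω) z = B.adjoint '' limNormal Ω (Ψ z) := by
  obtain ⟨s, hs, hΨs⟩ := hΨ.approximates_deriv_on_nhds (c := 1) (Or.inr one_pos)
  obtain ⟨r, hr, hrs⟩ := Metric.nhds_basis_closedBall.mem_iff.1 hs
  have hcl : IsClosed (Ψ ⁻¹' Ω ∩ Metric.closedBall z r) := by
    rw [inter_comm]
    exact (hΨs.continuousOn.mono hrs).preimage_isClosed_of_isClosed Metric.isClosed_closedBall hΩ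
  have hz' : z ∈ Ψ ⁻¹' Ω := hz
  rw [limNormal_eq_limFrechetNormal hz' (Metric.closedBall_mem_nhds z hr) hcl,
    limNormal_eq_limFrechetNormal hz univ_mem (by rwa [inter_univ]),
    limFrechetNormal_preimage hΨ hB]

end Preimage

section Pairs

theorem pmk_inj {X Y : Type*} [NormedAddCommGroup X] [NormedAddCommGroup Y] {a a' : X}
    {b b' : Y} : pmk a b = pmk a' b' ↔ a = a' ∧ b = b' :=
  ⟨fun h => ⟨congrArg pfst h, congrArg psnd h⟩, fun h => h.1 ▸ h.2 ▸ rfl⟩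

theorem pmk_zero_add_pmk {X Y : Type*} [NormedAddCommGroup X] [NormedAddCommGroup Y] (a s : X)
    (b : Y) : pmk s 0 + pmk a b = pmk (a + s) b :=
  pmk_inj.2 ⟨add_comm s a, zero_add b⟩

variable {E X Y : Type*} [NormedAddCommGroup E] [InnerProductSpace ℝ E]
  [NormedAddCommGroup X] [InnerProductSpace ℝ X] [NormedAddCommGroup Y] [InnerProductSpace ℝ Y]

/-- The continuous linear map into the `L²` product with components `f` and `h`. -/
def pmkL (f : E →L[ℝ] X) (h : E →L[ℝ] Y) : E →L[ℝ] WithLp 2 (X × Y) :=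
  (WithLp.prodContinuousLinearEquiv 2 ℝ X Y).symm ∘L f.prod h

theorem inner_pmk_left (a : X) (b : Y) (q : WithLp 2 (X × Y)) :
    ⟪pmk a b, q⟫ = ⟪a, pfst q⟫ + ⟪b, psnd q⟫ := WithLp.prod_inner_apply _ _

end Pairs

section Coderivative

variable {X Y : Type*} [NormedAddCommGroup X] [NormedAddCommGroup Y]

/-- The graph of a set-valued map, as a subset of the `L²` product. -/
def gph (G : X → Set Y) : Set (WithLp 2 (X × Y)) := {q | psnd q ∈ G (pfst q)}

theorem mem_gph {G : X → Set Y} {q : WithLp 2 (X × Y)} : q ∈ gph G ↔ psnd q ∈ G (pfst q) := Iff.rfl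

variable [InnerProductSpace ℝ X] [InnerProductSpace ℝ Y] {G G' : X → Set Y} {x v : X} {y w : Y}

theorem mem_coderiv_iff_mem_limFrechetNormal [FiniteDimensional ℝ X] [FiniteDimensional ℝ Y]
    (hG : IsClosed (gph G)) (hy : y ∈ G x) :
    v ∈ coderiv G x y w ↔ pmk v (-w) ∈ limFrechetNormal (gph G) (pmk x y) := by
  have hxy : pmk x y ∈ gph G := hy
  rw [← limNormal_eq_limFrechetNormal hxy univ_mem (by rwa [inter_univ])]
  rfl

theorem coderiv_congr [FiniteDimensional ℝ X] [FiniteDimensional ℝ Y] (hG : IsClosed (gph G))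
    (hG' : IsClosed (gph G')) (h : G =ᶠ[𝓝 x] G') (hy : y ∈ G x) :
    coderiv G x y w = coderiv G' x y w := by
  have hgph : gph G =ᶠ[𝓝 (pmk x y)] gph G' := by
    have hfst : Tendsto pfst (𝓝 (pmk x y)) (𝓝 x) := (WithLp.continuous_fst 2 X Y).tendsto _
    filter_upwards [hfst.eventually h] with q hq
    exact congrArg (psnd q ∈ ·) hq
  ext v
  rw [mem_coderiv_iff_mem_limFrechetNormal hG hy,
    mem_coderiv_iff_mem_limFrechetNormal hG' (h.eq_of_nhds ▸ hy), limFrechetNormal_congr hgph]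

end Coderivative

section CoderivativeSum

variable {E X Y : Type*} [NormedAddCommGroup E] [InnerProductSpace ℝ E]
  [NormedAddCommGroup X] [InnerProductSpace ℝ X] [NormedAddCommGroup Y] [InnerProductSpace ℝ Y]
  {P : E →L[ℝ] X} {g : E → Y} {g' : E →L[ℝ] Y} {p : E}

/-- The linear map `(d, e) ↦ (P d, e - g' d)`. It is the derivative of
`(q, ω) ↦ (P q, ω - g q)`, the map which pulls the graph of `G` back to the graph of
`q ↦ G (P q) + g q`. -/
def graphShear (P : E →L[ℝ] X) (g' : E →L[ℝ] Y) : WithLp 2 (E × Y) →L[ℝ] WithLp 2 (X × Y) :=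
  pmkL (P ∘L WithLp.fstL 2 ℝ E Y) (WithLp.sndL 2 ℝ E Y - g' ∘L WithLp.fstL 2 ℝ E Y)

theorem graphShear_pmk (d : E) (e : Y) : graphShear P g' (pmk d e) = pmk (P d) (e - g' d) := rfl

theorem range_graphShear (hP : P.range = ⊤) : (graphShear P g').range = ⊤ := by
  refine LinearMap.range_eq_top.2 fun q => ?_
  obtain ⟨d, hd : P d = pfst q⟩ := LinearMap.range_eq_top.1 hP (pfst q)
  refine ⟨pmk d (psnd q + g' d), ?_⟩
  change graphShear P g' (pmk d (psnd q + g' d)) = q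
  rw [graphShear_pmk, hd, add_sub_cancel_right]
  rfl

theorem adjoint_graphShear_pmk [CompleteSpace E] [CompleteSpace X] [CompleteSpace Y]
    (a : X) (b : Y) :
    (graphShear P g').adjoint (pmk a b) = pmk (P.adjoint a - g'.adjoint b) b := by
  refine ext_inner_right ℝ fun d => ?_
  rw [ContinuousLinearMap.adjoint_inner_left, inner_pmk_left, inner_pmk_left, inner_sub_left,
    P.adjoint_inner_left, g'.adjoint_inner_left]
  change ⟪a, P (pfst d)⟫ + ⟪b, psnd d - g' (pfst d)⟫ = _
  rw [inner_sub_right]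
  ring

theorem hasStrictFDerivAt_graphShear (hg : HasStrictFDerivAt g g' p) (ω : Y) :
    HasStrictFDerivAt (fun q : WithLp 2 (E × Y) => pmk (P (pfst q)) (psnd q - g (pfst q)))
      (graphShear P g') (pmk p ω) := by
  have hfst : HasStrictFDerivAt pfst (WithLp.fstL 2 ℝ E Y) (pmk p ω) :=
    (WithLp.fstL 2 ℝ E Y).hasStrictFDerivAt
  have hsnd : HasStrictFDerivAt psnd (WithLp.sndL 2 ℝ E Y) (pmk p ω) :=
    (WithLp.sndL 2 ℝ E Y).hasStrictFDerivAt
  exact (WithLp.prodContinuousLinearEquiv 2 ℝ X Y).symm.hasStrictFDerivAt.comp (pmk p ω)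
    ((P.hasStrictFDerivAt.comp (pmk p ω) hfst).prodMk (hsnd.sub (hg.comp (pmk p ω) hfst)))

theorem coderiv_comp_add [FiniteDimensional ℝ E] [FiniteDimensional ℝ X] [FiniteDimensional ℝ Y]
    {G : X → Set Y} (hG : IsClosed (gph G))
    (hP : P.range = ⊤) (hg : HasStrictFDerivAt g g' p) {F : E → Set Y}
    (hF : ∀ q, F q = {ω | ω - g q ∈ G (P q)}) {ω : Y} (hω : ω - g p ∈ G (P p)) (w : Y) :
    coderiv F p ω w =
      (fun a => P.adjoint a + g'.adjoint w) '' coderiv G (P p) (ω - g p) w := by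
  have hgraph : gph F = (fun q => pmk (P (pfst q)) (psnd q - g (pfst q))) ⁻¹' gph G := by
    ext q
    simp only [mem_gph, hF]
    rfl
  have hnormal : limNormal (gph F) (pmk p ω) =
      (graphShear P g').adjoint '' limNormal (gph G) (pmk (P p) (ω - g p)) := by
    rw [hgraph]
    exact limNormal_preimage (hasStrictFDerivAt_graphShear hg ω) (range_graphShear hP) hG hω
  ext v
  change pmk v (-w) ∈ limNormal (gph F) (pmk p ω) ↔ _
  rw [hnormal]
  constructor
  · rintro ⟨N, hN, hNv⟩
    obtain ⟨hv, hw⟩ := pmk_inj.1 ((adjoint_graphShear_pmk (pfst N) (psnd N)).symm.trans hNv)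
    refine ⟨pfst N, ?_, ?_⟩
    · rw [coderiv, mem_ofPred_eq, ← hw]
      exact hN
    · change P.adjoint (pfst N) + g'.adjoint w = v
      rw [← hv, hw, map_neg, sub_neg_eq_add]
  · rintro ⟨a, ha, rfl⟩
    refine ⟨pmk a (-w), ha, ?_⟩
    rw [adjoint_graphShear_pmk, map_neg, sub_neg_eq_add]

end CoderivativeSum

section CoderivativeFullRank

variable {X Y : Type*} [NormedAddCommGroup X] [InnerProductSpace ℝ X] [FiniteDimensional ℝ X]
  [NormedAddCommGroup Y] [InnerProductSpace ℝ Y] [FiniteDimensional ℝ Y]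
  {A : X →L[ℝ] Y} {R : Y →L[ℝ] X} {G : Y → Set Y} {x w : X} {μ : Y}

theorem mem_gph_adjoint_comp_iff (hR : Function.RightInverse R A) {q : WithLp 2 (X × X)} :
    q ∈ gph (fun y => A.adjoint '' G (A y)) ↔
      A.adjoint (R.adjoint (psnd q)) = psnd q ∧
        pmk (A (pfst q)) (R.adjoint (psnd q)) ∈ gph G := by
  constructor
  · rintro ⟨b, hb, hbq⟩
    have hRb : R.adjoint (psnd q) = b := by rw [← hbq, adjoint_rightInverse_adjoint hR]
    rw [hRb]
    exact ⟨hbq, hb⟩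
  · exact fun h => ⟨_, h.2, h.1⟩

theorem isClosed_gph_adjoint_comp (hR : Function.RightInverse R A) (hG : IsClosed (gph G)) :
    IsClosed (gph fun y => A.adjoint '' G (A y)) := by
  have hfst : Continuous (pfst : WithLp 2 (X × X) → X) := WithLp.continuous_fst 2 X X
  have hsnd : Continuous (psnd : WithLp 2 (X × X) → X) := WithLp.continuous_snd 2 X X
  have hcont : Continuous fun q : WithLp 2 (X × X) => pmk (A (pfst q)) (R.adjoint (psnd q)) :=
    (WithLp.prod_continuous_toLp 2 Y Y).comp (by fun_prop)
  have hset : (gph fun y => A.adjoint '' G (A y)) =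
      {q | A.adjoint (R.adjoint (psnd q)) = psnd q} ∩
        (fun q => pmk (A (pfst q)) (R.adjoint (psnd q))) ⁻¹' gph G :=
    Set.ext fun q => mem_gph_adjoint_comp_iff hR
  rw [hset]
  exact (isClosed_eq (by fun_prop) hsnd).inter (hG.preimage hcont)

/-- The map `(q, ν) ↦ (A q, R† ν)`. For a right inverse `R` of `A` it sends the graph of
`A† ∘ G ∘ A` onto the graph of `G`. -/
def graphPush (A : X →L[ℝ] Y) (R : Y →L[ℝ] X) : WithLp 2 (X × X) →L[ℝ] WithLp 2 (Y × Y) :=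
  pmkL (A ∘L WithLp.fstL 2 ℝ X X) (R.adjoint ∘L WithLp.sndL 2 ℝ X X)

theorem graphPush_pmk (d e : X) : graphPush A R (pmk d e) = pmk (A d) (R.adjoint e) := rfl

theorem graphPush_adjoint (hR : Function.RightInverse R A) (y : X) (μ : Y) :
    graphPush A R (pmk y (A.adjoint μ)) = pmk (A y) μ := by
  rw [graphPush_pmk, adjoint_rightInverse_adjoint hR]

/-- The section `(q, μ) ↦ (R q, A† μ)` of `graphPush A R`, for a right inverse `R` of `A`. -/
def graphLift (A : X →L[ℝ] Y) (R : Y →L[ℝ] X) : WithLp 2 (Y × Y) →L[ℝ] WithLp 2 (X × X) :=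
  pmkL (R ∘L WithLp.fstL 2 ℝ Y Y) (A.adjoint ∘L WithLp.sndL 2 ℝ Y Y)

theorem graphPush_graphLift (hR : Function.RightInverse R A) (q : WithLp 2 (Y × Y)) :
    graphPush A R (graphLift A R q) = q := by
  change graphPush A R (pmk (R (pfst q)) (A.adjoint (psnd q))) = q
  rw [graphPush_adjoint hR, hR]
  rfl

theorem add_graphLift_mem_gph (hR : Function.RightInverse R A) {z : WithLp 2 (X × X)}
    (hz : A.adjoint (R.adjoint (psnd z)) = psnd z) {q : WithLp 2 (Y × Y)} (hq : q ∈ gph G) :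
    z + graphLift A R (q - graphPush A R z) ∈ gph (fun y => A.adjoint '' G (A y)) := by
  refine ⟨psnd q, ?_, ?_⟩
  · change psnd q ∈ G (A (pfst z + R (pfst q - A (pfst z))))
    rw [map_add, hR, add_sub_cancel]
    exact hq
  · change A.adjoint (psnd q) = psnd z + A.adjoint (psnd q - R.adjoint (psnd z))
    rw [map_sub, hz, add_sub_cancel]

theorem coderiv_adjoint_comp_subset (hR : Function.RightInverse R A)
    (hG : IsClosed (gph G)) (hμ : μ ∈ G (A x)) :
    coderiv (fun y => A.adjoint '' G (A y)) x (A.adjoint μ) w ⊆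
      A.adjoint '' coderiv G (A x) μ (A w) := by
  intro v hv
  rw [mem_coderiv_iff_mem_limFrechetNormal (isClosed_gph_adjoint_comp hR hG) ⟨μ, hμ, rfl⟩] at hv
  have hker {d : X} (hd : A d = 0) : ⟪v, d⟫ ≤ 0 := by
    have hray : ∀ᶠ y in 𝓝[gph fun y => A.adjoint '' G (A y)] (pmk x (A.adjoint μ)),
        ∀ᶠ τ in 𝓝[>] (0 : ℝ), y + τ • pmk d 0 ∈ gph fun y => A.adjoint '' G (A y) := by
      refine eventually_mem_nhdsWithin.mono fun y ⟨b, hb, hby⟩ => Eventually.of_forall fun τ => ?_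
      refine ⟨b, ?_, ?_⟩
      · change b ∈ G (A (pfst y + τ • d))
        rwa [map_add, map_smul, hd, smul_zero, add_zero]
      · change A.adjoint b = psnd y + τ • 0
        rw [hby, smul_zero, add_zero]
    have hd0 := inner_nonpos_of_mem_limFrechetNormal hv hray
    rw [inner_pmk_left] at hd0
    change ⟪v, d⟫ + ⟪-w, 0⟫ ≤ 0 at hd0
    rwa [inner_zero_right, add_zero] at hd0
  refine ⟨R.adjoint v, ?_, adjoint_adjoint_rightInverse hR fun d hd => (hker hd).antisymm ?_⟩
  · rw [mem_coderiv_iff_mem_limFrechetNormal hG hμ]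
    refine mem_limFrechetNormal_of_affine hv (σ := graphPush A R) ?_ (graphLift A R)
      (fun z hz q hq => add_graphLift_mem_gph hR ((mem_gph_adjoint_comp_iff hR).1 hz).1 hq)
      fun z _ q _ => ?_
    · have hcont : Tendsto (graphPush A R) (𝓝 (pmk x (A.adjoint μ))) (𝓝 (pmk (A x) μ)) := by
        rw [← graphPush_adjoint hR]
        exact (graphPush A R).continuous.tendsto _
      exact tendsto_nhdsWithin_iff.2 ⟨hcont.mono_left nhdsWithin_le_nhds,
        eventually_mem_nhdsWithin.mono fun q hq => ((mem_gph_adjoint_comp_iff hR).1 hq).2⟩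
    · rw [inner_pmk_left, inner_pmk_left, R.adjoint_inner_left, ← map_neg, ← A.adjoint_inner_right]
      rfl
  · have hneg := hker (d := -d) (by rw [map_neg, hd, neg_zero])
    rwa [inner_neg_right, neg_nonpos] at hneg

theorem adjoint_mem_coderiv_adjoint_comp (hR : Function.RightInverse R A) (hG : IsClosed (gph G))
    (hμ : μ ∈ G (A x)) {v : Y} (hv : v ∈ coderiv G (A x) μ (A w)) :
    A.adjoint v ∈ coderiv (fun y => A.adjoint '' G (A y)) x (A.adjoint μ) w := by
  rw [mem_coderiv_iff_mem_limFrechetNormal hG hμ] at hv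
  rw [mem_coderiv_iff_mem_limFrechetNormal (isClosed_gph_adjoint_comp hR hG) ⟨μ, hμ, rfl⟩]
  have hbase : graphPush A R (pmk x (A.adjoint μ)) = pmk (A x) μ := graphPush_adjoint hR x μ
  have hσ : ∀ k ∈ gph G, pmk x (A.adjoint μ) + graphLift A R (k - pmk (A x) μ) ∈
      gph fun y => A.adjoint '' G (A y) := fun k hk => by
    rw [← hbase]
    refine add_graphLift_mem_gph hR ?_ hk
    change A.adjoint (R.adjoint (A.adjoint μ)) = A.adjoint μ
    rw [adjoint_rightInverse_adjoint hR]
  have hfix {q : WithLp 2 (X × X)} (hq : q ∈ gph fun y => A.adjoint '' G (A y)) :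
      A.adjoint (R.adjoint (psnd q)) = psnd q := ((mem_gph_adjoint_comp_iff hR).1 hq).1
  refine mem_limFrechetNormal_of_affine hv
    (σ := fun k => pmk x (A.adjoint μ) + graphLift A R (k - pmk (A x) μ)) ?_ (graphPush A R)
    (fun k _ q hq => ?_) fun k hk q hq => ?_
  · have hcont : Continuous fun k => pmk x (A.adjoint μ) + graphLift A R (k - pmk (A x) μ) := by
      fun_prop
    refine tendsto_nhdsWithin_iff.2 ⟨?_, eventually_mem_nhdsWithin.mono hσ⟩
    simpa using (hcont.tendsto (pmk (A x) μ)).mono_left nhdsWithin_le_nhds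
  · rw [map_sub, map_add, graphPush_graphLift hR, hbase, add_sub_cancel, add_sub_cancel]
    exact ((mem_gph_adjoint_comp_iff hR).1 hq).2
  · generalize hr : pmk x (A.adjoint μ) + graphLift A R (k - pmk (A x) μ) = r
    have hrfix : A.adjoint (R.adjoint (psnd r)) = psnd r := hfix (hr ▸ hσ k hk)
    rw [inner_pmk_left, inner_pmk_left, A.adjoint_inner_left, ← map_neg, ← A.adjoint_inner_right]
    change _ + ⟪-w, psnd q - psnd r⟫ =
      _ + ⟪-w, A.adjoint (R.adjoint (psnd q - psnd r))⟫
    rw [map_sub R.adjoint, map_sub A.adjoint, hfix hq, hrfix]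
    rfl

theorem coderiv_adjoint_comp (hA : A.range = ⊤) (hG : IsClosed (gph G)) (hμ : μ ∈ G (A x)) :
    coderiv (fun y => A.adjoint '' G (A y)) x (A.adjoint μ) w =
      A.adjoint '' coderiv G (A x) μ (A w) := by
  obtain ⟨R, hR⟩ := exists_continuousLinearMap_rightInverse hA
  exact (coderiv_adjoint_comp_subset hR hG hμ).antisymm
    (image_subset_iff.2 fun v hv => adjoint_mem_coderiv_adjoint_comp hR hG hμ hv)

end CoderivativeFullRank

section CoderivativePi

theorem mem_epsNormal_of_forall {ι E : Type*} [Fintype ι] {Z : ι → Type*}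
    [NormedAddCommGroup E] [InnerProductSpace ℝ E] [∀ j, NormedAddCommGroup (Z j)]
    [∀ j, InnerProductSpace ℝ (Z j)] {ε : ℝ} (hε : 0 ≤ ε) {Ω : Set E} {Θ : ∀ j, Set (Z j)} {y v : E}
    {u : ∀ j, Z j} {κ : ∀ j, E →L[ℝ] Z j} (hκ : ∀ j, MapsTo (κ j) Ω (Θ j))
    (hv : ∀ d, ⟪v, d⟫ = ∑ j, ⟪u j, κ j d⟫) (hu : ∀ j, u j ∈ epsNormal ε (Θ j) (κ j y)) :
    v ∈ epsNormal ((∑ j, ‖κ j‖) * ε) Ω y := by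
  have hall : ∀ᶠ q in 𝓝[Ω] y, ∀ j, ⟪u j, κ j q - κ j y⟫ ≤ ε * ‖κ j q - κ j y‖ := by
    refine eventually_all.2 fun j => ?_
    exact ((κ j).continuous.continuousWithinAt.tendsto_nhdsWithin (hκ j)).eventually (hu j)
  filter_upwards [hall] with q hq
  rw [hv, Finset.sum_mul, Finset.sum_mul]
  refine Finset.sum_le_sum fun j _ => ?_
  rw [map_sub]
  refine (hq j).trans ?_
  rw [mul_right_comm, mul_comm, ← map_sub]
  gcongr
  exact (κ j).le_opNorm _

variable {ι : Type*} [Fintype ι] {V W : ι → Type*} [∀ j, NormedAddCommGroup (V j)]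
  [∀ j, InnerProductSpace ℝ (V j)] [∀ j, NormedAddCommGroup (W j)]
  [∀ j, InnerProductSpace ℝ (W j)] {G : ∀ j, V j → Set (W j)}

/-- The product of set-valued maps `G j`, acting coordinatewise on an `L²` product. -/
def piMap (G : ∀ j, V j → Set (W j)) (y : PiLp 2 V) : Set (PiLp 2 W) := {ν | ∀ j, ν j ∈ G j (y j)}

variable (V W) in
/-- The projection of the `L²` product of pairs onto the pair of `j`-th coordinates. -/
def pairProj (j : ι) : WithLp 2 (PiLp 2 V × PiLp 2 W) →L[ℝ] WithLp 2 (V j × W j) :=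
  pmkL (PiLp.proj 2 V j ∘L WithLp.fstL 2 ℝ _ _) (PiLp.proj 2 W j ∘L WithLp.sndL 2 ℝ _ _)

variable (V W) in
/-- The inclusion of a pair of `j`-th coordinates, by zero in the other coordinates. -/
def pairSingle [DecidableEq ι] (j : ι) :
    WithLp 2 (V j × W j) →L[ℝ] WithLp 2 (PiLp 2 V × PiLp 2 W) :=
  pmkL ((PiLp.continuousLinearEquiv 2 ℝ V).symm ∘L .single ℝ V j ∘L WithLp.fstL 2 ℝ _ _)
    ((PiLp.continuousLinearEquiv 2 ℝ W).symm ∘L .single ℝ W j ∘L WithLp.sndL 2 ℝ _ _)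

theorem mem_gph_piMap {q : WithLp 2 (PiLp 2 V × PiLp 2 W)} :
    q ∈ gph (piMap G) ↔ ∀ j, pairProj V W j q ∈ gph (G j) := Iff.rfl

theorem isClosed_gph_piMap (hG : ∀ j, IsClosed (gph (G j))) : IsClosed (gph (piMap G)) := by
  have hset : gph (piMap G) = ⋂ j, pairProj V W j ⁻¹' gph (G j) := by
    ext q
    rw [mem_gph_piMap, mem_iInter]
    rfl
  rw [hset]
  exact isClosed_iInter fun j => (hG j).preimage (pairProj V W j).continuous

theorem pairProj_pairSingle_same [DecidableEq ι] (j : ι) (d : WithLp 2 (V j × W j)) :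
    pairProj V W j (pairSingle V W j d) = d := by
  refine pmk_inj.2 ⟨?_, ?_⟩
  · exact Pi.single_eq_same j (pfst d)
  · exact Pi.single_eq_same j (psnd d)

theorem pairProj_pairSingle_of_ne [DecidableEq ι] {i j : ι} (h : i ≠ j) (d : WithLp 2 (V j × W j)) :
    pairProj V W i (pairSingle V W j d) = 0 := by
  refine pmk_inj.2 ⟨?_, ?_⟩
  · exact Pi.single_eq_of_ne h (pfst d)
  · exact Pi.single_eq_of_ne h (psnd d)

theorem inner_eq_sum_inner_pairProj (N d : WithLp 2 (PiLp 2 V × PiLp 2 W)) :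
    ⟪N, d⟫ = ∑ j, ⟪pairProj V W j N, pairProj V W j d⟫ := by
  rw [WithLp.prod_inner_apply, PiLp.inner_apply, PiLp.inner_apply, ← Finset.sum_add_distrib]
  rfl

theorem pairProj_mem_limFrechetNormal {N p : WithLp 2 (PiLp 2 V × PiLp 2 W)}
    (hN : N ∈ limFrechetNormal (gph (piMap G)) p) (j : ι) :
    pairProj V W j N ∈ limFrechetNormal (gph (G j)) (pairProj V W j p) := by
  classical
  refine mem_limFrechetNormal_of_affine hN (σ := pairProj V W j)
    ((pairProj V W j).continuous.continuousWithinAt.tendsto_nhdsWithin fun q hq => hq j)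
    (pairSingle V W j) (fun y hy q hq => mem_gph_piMap.2 fun i => ?_) fun y _ q _ => ?_
  · rw [map_add]
    obtain rfl | hij := eq_or_ne i j
    · rwa [pairProj_pairSingle_same, add_sub_cancel]
    · rw [pairProj_pairSingle_of_ne hij, add_zero]
      exact hy i
  · rw [inner_eq_sum_inner_pairProj, Finset.sum_eq_single j, pairProj_pairSingle_same]
    · exact fun i _ hij => by rw [pairProj_pairSingle_of_ne hij, inner_zero_right]
    · exact fun h => (h (Finset.mem_univ j)).elim

theorem mem_limFrechetNormal_gph_piMap {N p : WithLp 2 (PiLp 2 V × PiLp 2 W)}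
    (hN : ∀ j, pairProj V W j N ∈ limFrechetNormal (gph (G j)) (pairProj V W j p)) :
    N ∈ limFrechetNormal (gph (piMap G)) p := by
  refine mem_limFrechetNormal_of_const_mul (∑ j, ‖pairProj V W j‖) fun ε hε => ?_
  let assemble (f : ∀ j, WithLp 2 (V j × W j)) : WithLp 2 (PiLp 2 V × PiLp 2 W) :=
    pmk (WithLp.toLp 2 fun j => pfst (f j)) (WithLp.toLp 2 fun j => psnd (f j))
  have hassemble : Continuous assemble := by
    refine (WithLp.prod_continuous_toLp 2 _ _).comp (.prodMk ?_ ?_)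
    · exact (PiLp.continuous_toLp 2 V).comp (continuous_pi fun j =>
        (WithLp.continuous_fst 2 (V j) (W j)).comp (continuous_apply j))
    · exact (PiLp.continuous_toLp 2 W).comp (continuous_pi fun j =>
        (WithLp.continuous_snd 2 (V j) (W j)).comp (continuous_apply j))
  have hlim : Tendsto assemble
      (Filter.pi fun j => 𝓝[gph (G j)] (pairProj V W j p)) (𝓝[gph (piMap G)] p) := by
    refine tendsto_nhdsWithin_iff.2 ⟨?_, eventually_pi fun j => self_mem_nhdsWithin⟩
    refine (hassemble.tendsto fun j => pairProj V W j p).mono_left ?_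
    rw [nhds_pi]
    exact Filter.pi_mono fun j => nhdsWithin_le_nhds
  have hpoints : ∃ᶠ f in Filter.pi fun j => 𝓝[gph (G j)] (pairProj V W j p),
      ∀ j, pairProj V W j N ∈ epsNormal ε (gph (G j)) (f j) := by
    have hne := pi_inf_principal_univ_pi_neBot.2 fun j => frequently_mem_iff_neBot.1 (hN j ε hε)
    exact (frequently_mem_iff_neBot.2 hne).mono fun f hf j => hf j (mem_univ j)
  refine hlim.frequently (hpoints.mono fun f hf => ?_)
  exact mem_epsNormal_of_forall hε.le (fun j q hq => hq j) (inner_eq_sum_inner_pairProj N) hf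

theorem coderiv_piMap [∀ j, FiniteDimensional ℝ (V j)] [∀ j, FiniteDimensional ℝ (W j)]
    (hG : ∀ j, IsClosed (gph (G j))) {y : PiLp 2 V} {ν w : PiLp 2 W}
    (hν : ν ∈ piMap G y) :
    coderiv (piMap G) y ν w = {v | ∀ j, v j ∈ coderiv (G j) (y j) (ν j) (w j)} := by
  ext v
  rw [mem_coderiv_iff_mem_limFrechetNormal (isClosed_gph_piMap hG) hν]
  have hcoord (j : ι) : v j ∈ coderiv (G j) (y j) (ν j) (w j) ↔
      pairProj V W j (pmk v (-w)) ∈ limFrechetNormal (gph (G j)) (pairProj V W j (pmk y ν)) :=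
    mem_coderiv_iff_mem_limFrechetNormal (hG j) (hν j)
  rw [mem_ofPred_eq, forall_congr' hcoord]
  exact ⟨pairProj_mem_limFrechetNormal, mem_limFrechetNormal_gph_piMap⟩

end CoderivativePi

theorem isClosed_gph_convNormal {X : Type*} [NormedAddCommGroup X] [InnerProductSpace ℝ X]
    {C : Set X} (hC : IsClosed C) : IsClosed (gph (convNormal C)) := by
  have hfst : Continuous (pfst : WithLp 2 (X × X) → X) := WithLp.continuous_fst 2 X X
  have hsnd : Continuous (psnd : WithLp 2 (X × X) → X) := WithLp.continuous_snd 2 X X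
  have hset : gph (convNormal C) =
      pfst ⁻¹' C ∩ ⋂ y ∈ C, {q | ⟪psnd q, y - pfst q⟫ ≤ 0} := by
    ext q
    simp only [mem_inter_iff, mem_iInter]
    rfl
  rw [hset]
  exact (hC.preimage hfst).inter
    (isClosed_biInter fun y _ => isClosed_le (by fun_prop) continuous_const)

section HalfLine

variable {b y γ ν t ε : ℝ}

theorem mem_convNormal_Iic : ν ∈ convNormal (Iic b) y ↔ y ≤ b ∧ 0 ≤ ν ∧ (y = b ∨ ν = 0) := by
  constructor
  · rintro ⟨hy : y ≤ b, h⟩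
    have hnormal (z : ℝ) (hz : z ≤ b) : (z - y) * ν ≤ 0 := h z hz
    have hν : 0 ≤ ν := by linarith [hnormal (y - 1) (by linarith)]
    refine ⟨hy, hν, hy.eq_or_lt.imp_right fun hlt => ?_⟩
    exact hν.antisymm' (nonpos_of_mul_nonpos_right (hnormal b le_rfl) (sub_pos.2 hlt))
  · rintro ⟨hy, hν, h⟩
    refine ⟨hy, fun z (hz : z ≤ b) => ?_⟩
    change (z - y) * ν ≤ 0
    obtain rfl | rfl := h
    · exact mul_nonpos_of_nonpos_of_nonneg (sub_nonpos.2 hz) hν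
    · rw [mul_zero]

theorem mem_gph_convNormal_Iic {q : WithLp 2 (ℝ × ℝ)} : q ∈ gph (convNormal (Iic b)) ↔
    pfst q ≤ b ∧ 0 ≤ psnd q ∧ (pfst q = b ∨ psnd q = 0) := mem_convNormal_Iic

theorem inner_pmk_real (q : WithLp 2 (ℝ × ℝ)) : ⟪pmk γ t, q⟫ = pfst q * γ + psnd q * t :=
  inner_pmk_left γ t q

theorem estimates_of_mem_epsNormal_gph_convNormal_Iic {q : WithLp 2 (ℝ × ℝ)}
    (hq : q ∈ gph (convNormal (Iic b)))
    (h : pmk γ (-t) ∈ epsNormal ε (gph (convNormal (Iic b))) q) :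
    (t ≤ ε ∨ -γ ≤ ε) ∧ (-t ≤ ε ∨ |γ| ≤ ε) := by
  obtain ⟨hqb, hq0, hcompl⟩ := mem_gph_convNormal_Iic.1 hq
  have hray {α β : ℝ} (hnorm : ‖pmk α β‖ = 1) (hmem : ∀ᶠ τ in 𝓝[>] (0 : ℝ),
      pfst q + τ * α ≤ b ∧ 0 ≤ psnd q + τ * β ∧ (pfst q + τ * α = b ∨ psnd q + τ * β = 0)) :
      α * γ + β * -t ≤ ε := by
    have hle := inner_le_of_mem_epsNormal_of_ray (w := pmk α β) h
      (hmem.mono fun τ hτ => mem_gph_convNormal_Iic.2 hτ)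
    rwa [hnorm, mul_one, inner_pmk_real] at hle
  have hup (hb : pfst q = b) : -t ≤ ε := by
    refine (le_of_eq (by ring)).trans (hray (α := 0) (β := 1) (by simp [pmk]) ?_)
    filter_upwards [self_mem_nhdsWithin] with τ (hτ : 0 < τ)
    exact ⟨by linarith, by linarith, Or.inl (by linarith)⟩
  have hdown (hpos : 0 < psnd q) : t ≤ ε := by
    refine (le_of_eq (by ring)).trans (hray (α := 0) (β := -1) (by simp [pmk]) ?_)
    filter_upwards [Ioo_mem_nhdsGT hpos] with τ hτ
    exact ⟨by linarith, by linarith [hτ.2], Or.inl (by linarith [hcompl.resolve_right hpos.ne'])⟩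
  have hleft (h0 : psnd q = 0) : -γ ≤ ε := by
    refine (le_of_eq (by ring)).trans (hray (α := -1) (β := 0) (by simp [pmk]) ?_)
    filter_upwards [self_mem_nhdsWithin] with τ (hτ : 0 < τ)
    exact ⟨by linarith, by linarith, Or.inr (by linarith)⟩
  have hright (hlt : pfst q < b) : γ ≤ ε := by
    refine (le_of_eq (by ring)).trans (hray (α := 1) (β := 0) (by simp [pmk]) ?_)
    filter_upwards [Ioo_mem_nhdsGT (sub_pos.2 hlt)] with τ hτ
    exact ⟨by linarith [hτ.2], by linarith, Or.inr (by linarith [hcompl.resolve_left hlt.ne])⟩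
  refine ⟨hq0.lt_or_eq.imp hdown fun h0 => hleft h0.symm, hqb.eq_or_lt.imp hup fun hlt => ?_⟩
  exact abs_le'.2 ⟨hright hlt, hleft (hcompl.resolve_left hlt.ne)⟩

theorem eq_zero_of_mem_limFrechetNormal_gph_convNormal_Iic (hν : 0 < ν)
    (h : pmk γ (-t) ∈ limFrechetNormal (gph (convNormal (Iic b))) (pmk b ν)) : t = 0 := by
  have hpos : ∀ᶠ q in 𝓝[gph (convNormal (Iic b))] (pmk b ν), 0 < psnd q :=
    nhdsWithin_le_nhds (((WithLp.continuous_snd 2 ℝ ℝ).tendsto (pmk b ν)).eventually_const_lt hν)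
  have hle (β : ℝ) : β * -t ≤ 0 := by
    have hray : ∀ᶠ q in 𝓝[gph (convNormal (Iic b))] (pmk b ν), ∀ᶠ τ in 𝓝[>] (0 : ℝ),
        q + τ • pmk 0 β ∈ gph (convNormal (Iic b)) := by
      filter_upwards [hpos, self_mem_nhdsWithin] with q hq hmem
      obtain ⟨-, -, hcompl⟩ := mem_gph_convNormal_Iic.1 hmem
      have hlim : Tendsto (fun τ : ℝ => psnd q + τ * β) (𝓝[>] 0) (𝓝 (psnd q)) :=
        tendsto_add_smul_nhdsGT _ _
      filter_upwards [hlim.eventually_const_lt hq] with τ hτ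
      have hfst : pfst (q + τ • pmk 0 β) = b := by
        change pfst q + τ * 0 = b
        rw [mul_zero, add_zero, hcompl.resolve_right hq.ne']
      exact mem_gph_convNormal_Iic.2 ⟨hfst.le, hτ.le, Or.inl hfst⟩
    have hinner := inner_nonpos_of_mem_limFrechetNormal h hray
    rw [inner_pmk_real] at hinner
    change 0 * γ + β * -t ≤ 0 at hinner
    rwa [zero_mul, zero_add] at hinner
  linarith [hle 1, hle (-1)]

theorem pmk_mem_epsNormal_gph_convNormal_Iic_of_lt (hy : y < b) :
    pmk 0 t ∈ epsNormal 0 (gph (convNormal (Iic b))) (pmk y 0) := by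
  have hfst : Tendsto pfst (𝓝 (pmk y (0 : ℝ))) (𝓝 y) := (WithLp.continuous_fst 2 ℝ ℝ).tendsto _
  filter_upwards [nhdsWithin_le_nhds (hfst.eventually_lt_const hy), self_mem_nhdsWithin]
    with q hqb hq
  have hq0 : psnd q = 0 := (mem_gph_convNormal_Iic.1 hq).2.2.resolve_left hqb.ne
  rw [inner_pmk_real, zero_mul]
  change _ * 0 + (psnd q - 0) * t ≤ 0
  rw [hq0, mul_zero, sub_zero, zero_mul, add_zero]

theorem pmk_mem_epsNormal_gph_convNormal_Iic_of_pos (hν : 0 < ν) :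
    pmk γ 0 ∈ epsNormal 0 (gph (convNormal (Iic b))) (pmk b ν) := by
  have hsnd : Tendsto psnd (𝓝 (pmk b ν)) (𝓝 ν) := (WithLp.continuous_snd 2 ℝ ℝ).tendsto _
  filter_upwards [nhdsWithin_le_nhds (hsnd.eventually_const_lt hν), self_mem_nhdsWithin]
    with q hq0 hq
  have hqb : pfst q = b := (mem_gph_convNormal_Iic.1 hq).2.2.resolve_right hq0.ne'
  rw [inner_pmk_real, zero_mul]
  change (pfst q - b) * γ + _ * 0 ≤ 0
  rw [hqb, sub_self, zero_mul, mul_zero, add_zero]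

theorem pmk_mem_epsNormal_gph_convNormal_Iic_corner (hγ : 0 ≤ γ) (ht : 0 ≤ t) :
    pmk γ (-t) ∈ epsNormal 0 (gph (convNormal (Iic b))) (pmk b 0) := by
  filter_upwards [self_mem_nhdsWithin] with q hq
  obtain ⟨hqb, hq0, -⟩ := mem_gph_convNormal_Iic.1 hq
  rw [inner_pmk_real, zero_mul]
  change (pfst q - b) * γ + (psnd q - 0) * -t ≤ 0
  nlinarith [mul_nonneg (sub_nonneg.2 hqb) hγ, mul_nonneg hq0 ht]

theorem mem_limFrechetNormal_gph_convNormal_Iic (hν : 0 ≤ ν) (hpos : 0 < ν → t = 0)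
    (ht : 0 < t → 0 ≤ γ) (ht' : t < 0 → γ = 0) :
    pmk γ (-t) ∈ limFrechetNormal (gph (convNormal (Iic b))) (pmk b ν) := by
  have hν0 (h : t ≠ 0) : ν = 0 := hν.antisymm' (not_lt.1 fun hlt => h (hpos hlt))
  have hmk : Continuous fun q : ℝ × ℝ => pmk q.1 q.2 := WithLp.prod_continuous_toLp 2 ℝ ℝ
  rcases lt_trichotomy t 0 with hneg | rfl | hgt
  · rw [hν0 hneg.ne, ht' hneg]
    have hc : Continuous fun y : ℝ => pmk y (0 : ℝ) :=
      hmk.comp (.prodMk continuous_id (by fun_prop))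
    refine mem_limFrechetNormal_of_tendsto ((hc.tendsto b).mono_left nhdsWithin_le_nhds)
      (l := 𝓝[<] b) ?_ ?_
    all_goals filter_upwards [self_mem_nhdsWithin] with y (hy : y < b)
    · exact mem_gph_convNormal_Iic.2 ⟨hy.le, le_rfl, Or.inr rfl⟩
    · exact pmk_mem_epsNormal_gph_convNormal_Iic_of_lt hy
  · rw [neg_zero]
    have hc : Continuous fun μ : ℝ => pmk b μ := hmk.comp (.prodMk (by fun_prop) continuous_id)
    refine mem_limFrechetNormal_of_tendsto ((hc.tendsto ν).mono_left nhdsWithin_le_nhds)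
      (l := 𝓝[>] ν) ?_ ?_
    all_goals filter_upwards [self_mem_nhdsWithin] with μ (hμ : ν < μ)
    · exact mem_gph_convNormal_Iic.2 ⟨le_rfl, hν.trans hμ.le, Or.inl rfl⟩
    · exact pmk_mem_epsNormal_gph_convNormal_Iic_of_pos (hν.trans_lt hμ)
  · rw [hν0 hgt.ne']
    exact mem_limFrechetNormal_of_tendsto (l := pure ()) (tendsto_pure_nhds _ _)
      (Eventually.of_forall fun _ => mem_gph_convNormal_Iic.2 ⟨le_rfl, le_rfl, Or.inl rfl⟩)
      (Eventually.of_forall fun _ => pmk_mem_epsNormal_gph_convNormal_Iic_corner (ht hgt) hgt.le)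

theorem coderiv_convNormal_Iic (hν : 0 ≤ ν) : coderiv (convNormal (Iic b)) b ν t =
    {γ | (0 < ν → t = 0) ∧ (0 < t → 0 ≤ γ) ∧ (t < 0 → γ = 0)} := by
  ext γ
  rw [mem_coderiv_iff_mem_limFrechetNormal (isClosed_gph_convNormal isClosed_Iic)
    (mem_convNormal_Iic.2 ⟨le_rfl, hν, Or.inl rfl⟩)]
  constructor
  · intro h
    have hest : ∀ ε > 0, (t ≤ ε ∨ -γ ≤ ε) ∧ (-t ≤ ε ∨ |γ| ≤ ε) := fun ε hε => by
      obtain ⟨q, hq, hmem⟩ := ((h ε hε).and_eventually eventually_mem_nhdsWithin).exists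
      exact estimates_of_mem_epsNormal_gph_convNormal_Iic hmem hq
    refine ⟨fun hpos => eq_zero_of_mem_limFrechetNormal_gph_convNormal_Iic hpos h,
      fun ht => ?_, fun ht => ?_⟩
    · by_contra! hγ
      obtain ⟨ε, hε, hlt⟩ := exists_between (lt_min ht (neg_pos.2 hγ))
      obtain ⟨hεt, hεγ⟩ := lt_min_iff.1 hlt
      exact (hest ε hε).1.elim hεt.not_ge hεγ.not_ge
    · by_contra! hγ
      obtain ⟨ε, hε, hlt⟩ := exists_between (lt_min (neg_pos.2 ht) (abs_pos.2 hγ))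
      obtain ⟨hεt, hεγ⟩ := lt_min_iff.1 hlt
      exact (hest ε hε).2.elim hεt.not_ge hεγ.not_ge
  · exact fun h => mem_limFrechetNormal_gph_convNormal_Iic hν h.1 h.2.1 h.2.2

end HalfLine

section ConvNormal

variable {X Y : Type*} [NormedAddCommGroup X] [InnerProductSpace ℝ X]
  [NormedAddCommGroup Y] [InnerProductSpace ℝ Y] {C C' : Set X} {x : X}

theorem convNormal_subset_of_eventuallyEq (hC' : Convex ℝ C') (h : C =ᶠ[𝓝 x] C') :
    convNormal C x ⊆ convNormal C' x := by
  rintro v ⟨hx, hv⟩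
  have hx' : x ∈ C' := h.mem_iff.self_of_nhds.1 hx
  refine ⟨hx', fun y hy => ?_⟩
  have hmem : ∀ᶠ τ in 𝓝[>] (0 : ℝ), x + τ • (y - x) ∈ C ↔ x + τ • (y - x) ∈ C' :=
    (tendsto_add_smul_nhdsGT x (y - x)).eventually h.mem_iff
  obtain ⟨τ, hτ, hpos, hle⟩ := (hmem.and (Ioo_mem_nhdsGT one_pos)).exists
  have hτv := hv _ (hτ.2 (hC'.add_smul_sub_mem hx' hy ⟨hpos.le, hle.le⟩))
  rw [add_sub_cancel_left, real_inner_smul_right] at hτv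
  exact nonpos_of_mul_nonpos_right hτv hpos

theorem eventuallyEq_convNormal (hC : Convex ℝ C) (hC' : Convex ℝ C') (h : C =ᶠ[𝓝 x] C') :
    convNormal C =ᶠ[𝓝 x] convNormal C' :=
  (eventually_eventually_nhds.2 h).mono fun _ hy =>
    (convNormal_subset_of_eventuallyEq hC' hy).antisymm
      (convNormal_subset_of_eventuallyEq hC (EventuallyEq.symm hy))

theorem convNormal_preimage [FiniteDimensional ℝ X] [FiniteDimensional ℝ Y] {A : X →L[ℝ] Y}
    (hA : A.range = ⊤) (Q : Set Y) (x : X) :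
    convNormal (A ⁻¹' Q) x = A.adjoint '' convNormal Q (A x) := by
  obtain ⟨R, hR⟩ := exists_continuousLinearMap_rightInverse hA
  ext v
  constructor
  · rintro ⟨hx, hv⟩
    have hker {d : X} (hd : A d = 0) : ⟪v, d⟫ ≤ 0 := by
      have hxd : x + d ∈ A ⁻¹' Q := by rwa [mem_preimage, map_add, hd, add_zero]
      simpa using hv (x + d) hxd
    refine ⟨R.adjoint v, ⟨hx, fun y hy => ?_⟩,
      adjoint_adjoint_rightInverse hR fun d hd => (hker hd).antisymm ?_⟩
    · have hxy : x + R (y - A x) ∈ A ⁻¹' Q := by rwa [mem_preimage, map_add, hR, add_sub_cancel]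
      have hle := hv _ hxy
      rwa [add_sub_cancel_left, ← R.adjoint_inner_left] at hle
    · have hneg := hker (d := -d) (by rw [map_neg, hd, neg_zero])
      rwa [inner_neg_right, neg_nonpos] at hneg
  · rintro ⟨μ, ⟨hx, hμ⟩, rfl⟩
    refine ⟨hx, fun y hy => ?_⟩
    rw [A.adjoint_inner_left, map_sub]
    exact hμ _ hy

theorem convNormal_pi {ι : Type*} [Fintype ι] {V : ι → Type*} [∀ j, NormedAddCommGroup (V j)]
    [∀ j, InnerProductSpace ℝ (V j)] (Q : ∀ j, Set (V j)) :
    convNormal {y : PiLp 2 V | ∀ j, y j ∈ Q j} = piMap fun j => convNormal (Q j) := by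
  classical
  ext y ν
  constructor
  · rintro ⟨hy, hν⟩ j
    refine ⟨hy j, fun z hz => ?_⟩
    have hmem : WithLp.toLp 2 (Function.update y.ofLp j z) ∈ {y : PiLp 2 V | ∀ j, y j ∈ Q j} :=
      fun i => by
        obtain rfl | hij := eq_or_ne i j
        · simpa using hz
        · simpa [hij] using hy i
    have hle := hν _ hmem
    rw [PiLp.inner_apply, Finset.sum_eq_single j] at hle
    · simpa using hle
    · intro i _ hij
      simp [hij]
    · exact fun h => (h (Finset.mem_univ j)).elim
  · intro h
    refine ⟨fun j => (h j).1, fun z hz => ?_⟩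
    rw [PiLp.inner_apply]
    exact Finset.sum_nonpos fun j _ => (h j).2 (z j) (hz j)

end ConvNormal

section Polyhedra

variable {ι X : Type*} [NormedAddCommGroup X] [InnerProductSpace ℝ X] {a : ι → X} {c : ι → ℝ}
  {x w v : X}

/-- The polyhedron cut out by the linear inequalities `⟪a j, x⟫ ≤ c j`. -/
def polyhedron (a : ι → X) (c : ι → ℝ) : Set X := {x | ∀ j, ⟪a j, x⟫ ≤ c j}

theorem isClosed_polyhedron : IsClosed (polyhedron a c) := by
  have hset : polyhedron a c = ⋂ j, {x | ⟪a j, x⟫ ≤ c j} := by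
    ext x
    rw [mem_iInter]
    rfl
  rw [hset]
  exact isClosed_iInter fun j => isClosed_le (by fun_prop) continuous_const

theorem convex_polyhedron : Convex ℝ (polyhedron a c) := by
  have hset : polyhedron a c = ⋂ j, {x | innerSL ℝ (a j) x ≤ c j} := by
    ext x
    rw [mem_iInter]
    rfl
  rw [hset]
  exact convex_iInter fun j => convex_halfSpace_le (innerSL ℝ (a j)).isLinear (c j)

theorem polyhedron_eventuallyEq_active [Finite ι] (hx : x ∈ polyhedron a c) :
    polyhedron a c =ᶠ[𝓝 x] polyhedron (fun j : {j // ⟪a j, x⟫ = c j} => a j) fun j => c j := by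
  have hinactive : ∀ᶠ y in 𝓝 x, ∀ j, ⟪a j, x⟫ ≠ c j → ⟪a j, y⟫ < c j := by
    refine eventually_all.2 fun j => ?_
    by_cases hj : ⟪a j, x⟫ = c j
    · exact Eventually.of_forall fun y h => (h hj).elim
    · have hcont : Continuous fun y => ⟪a j, y⟫ := by fun_prop
      exact ((hcont.tendsto x).eventually_lt_const ((hx j).lt_of_ne hj)).mono fun y hy _ => hy
  filter_upwards [hinactive] with y hy
  refine propext ⟨fun h j => h j, fun h j => ?_⟩
  by_cases hj : ⟪a j, x⟫ = c j
  · exact h ⟨j, hj⟩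
  · exact (hy j hj).le

/-- The map sending `x` to the vector of its inner products with the `a j`. It presents a
polyhedron as the preimage of a product of half-lines, and its adjoint sends coefficients `γ` to
`∑ j, γ j • a j`. -/
def innerFamily (a : ι → X) : X →L[ℝ] EuclideanSpace ℝ ι :=
  (EuclideanSpace.equiv ι ℝ).symm.toContinuousLinearMap ∘L .pi fun j => innerSL ℝ (a j)

theorem polyhedron_eq_preimage_innerFamily : polyhedron a c =
    innerFamily a ⁻¹' {y : EuclideanSpace ℝ ι | ∀ j, y j ∈ Iic (c j)} := rfl

theorem adjoint_innerFamily [Fintype ι] [CompleteSpace X] (a : ι → X) (γ : EuclideanSpace ℝ ι) :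
    (innerFamily a).adjoint γ = ∑ j, γ j • a j := by
  refine ext_inner_right ℝ fun x => ?_
  rw [ContinuousLinearMap.adjoint_inner_left, PiLp.inner_apply, sum_inner]
  refine Finset.sum_congr rfl fun j _ => ?_
  rw [real_inner_smul_left]
  exact mul_comm ⟪a j, x⟫ (γ j)

theorem range_innerFamily [Finite ι] [CompleteSpace X] (ha : LinearIndependent ℝ a) :
    (innerFamily a).range = ⊤ := by
  cases nonempty_fintype ι
  rw [← Submodule.orthogonal_eq_bot_iff, ContinuousLinearMap.orthogonal_range]
  refine (Submodule.eq_bot_iff _).2 fun γ hγ => ?_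
  have hsum : ∑ j, γ j • a j = 0 := by
    rw [← adjoint_innerFamily]
    exact hγ
  ext j
  exact Fintype.linearIndependent_iff.1 ha γ hsum j

variable [Fintype ι] [FiniteDimensional ℝ X]

theorem convNormal_polyhedron (ha : LinearIndependent ℝ a) : convNormal (polyhedron a c) = fun x =>
    (innerFamily a).adjoint '' piMap (fun j => convNormal (Iic (c j))) (innerFamily a x) := by
  ext1 x
  rw [polyhedron_eq_preimage_innerFamily, convNormal_preimage (range_innerFamily ha), convNormal_pi]

theorem coderiv_convNormal_polyhedron_of_active (ha : LinearIndependent ℝ a)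
    (hx : ∀ j, ⟪a j, x⟫ = c j) {ν : EuclideanSpace ℝ ι} (hν : ∀ j, 0 ≤ ν j) :
    coderiv (convNormal (polyhedron a c)) x ((innerFamily a).adjoint ν) w =
      (innerFamily a).adjoint '' {γ | ∀ j, (0 < ν j → ⟪a j, w⟫ = 0) ∧
        (0 < ⟪a j, w⟫ → 0 ≤ γ j) ∧ (⟪a j, w⟫ < 0 → γ j = 0)} := by
  have hclosed (j : ι) : IsClosed (gph (convNormal (Iic (c j)))) :=
    isClosed_gph_convNormal isClosed_Iic
  have hν' : ν ∈ piMap (fun j => convNormal (Iic (c j))) (innerFamily a x) := fun j =>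
    mem_convNormal_Iic.2 ⟨(hx j).le, hν j, Or.inl (hx j)⟩
  rw [convNormal_polyhedron ha, coderiv_adjoint_comp (range_innerFamily ha)
    (isClosed_gph_piMap hclosed) hν', coderiv_piMap hclosed hν']
  congr 1
  ext γ
  refine forall_congr' fun j => ?_
  change γ j ∈ coderiv (convNormal (Iic (c j))) ⟪a j, x⟫ (ν j) ⟪a j, w⟫ ↔ _
  rw [hx j, coderiv_convNormal_Iic (hν j)]
  rfl

theorem mem_image_adjoint_innerFamily_active_iff (a : ι → X) (c : ι → ℝ) (x w v : X) :
    v ∈ (innerFamily fun j : {j // ⟪a j, x⟫ = c j} => a j).adjoint ''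
        {γ | ∀ j : {j // ⟪a j, x⟫ = c j},
          (0 < ⟪a j, w⟫ → 0 ≤ γ j) ∧ (⟪a j, w⟫ < 0 → γ j = 0)} ↔
      ∃ γ : ι → ℝ, (∀ j, ⟪a j, x⟫ = c j ∧ 0 < ⟪a j, w⟫ → 0 ≤ γ j) ∧
        (∀ j, ¬(⟪a j, x⟫ = c j ∧ 0 ≤ ⟪a j, w⟫) → γ j = 0) ∧ v = ∑ j, γ j • a j := by
  have hsum {γ : ι → ℝ} (hγ : ∀ j, ⟪a j, x⟫ ≠ c j → γ j = 0) :
      ∑ j : {j // ⟪a j, x⟫ = c j}, γ j • a j = ∑ j, γ j • a j := by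
    refine Fintype.sum_of_injective Subtype.val Subtype.val_injective _ _ (fun j hj => ?_)
      fun _ => rfl
    rw [hγ j fun h => hj ⟨⟨j, h⟩, rfl⟩, zero_smul]
  constructor
  · rintro ⟨γ, hγ, rfl⟩
    let δ (j : ι) : ℝ := if h : ⟪a j, x⟫ = c j then γ ⟨j, h⟩ else 0
    have hδ (j : {j // ⟪a j, x⟫ = c j}) : δ j = γ j := dif_pos j.2
    have hδ0 (j : ι) (h : ⟪a j, x⟫ ≠ c j) : δ j = 0 := dif_neg h
    refine ⟨δ, fun j hj => ?_, fun j hj => ?_, ?_⟩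
    · rw [hδ ⟨j, hj.1⟩]
      exact (hγ ⟨j, hj.1⟩).1 hj.2
    · by_cases h : ⟪a j, x⟫ = c j
      · rw [hδ ⟨j, h⟩]
        exact (hγ ⟨j, h⟩).2 (not_le.1 fun hle => hj ⟨h, hle⟩)
      · exact hδ0 j h
    · rw [← hsum hδ0, adjoint_innerFamily]
      exact Finset.sum_congr rfl fun j _ => by rw [hδ]
  · rintro ⟨γ, hpos, hzero, rfl⟩
    refine ⟨WithLp.toLp 2 fun j => γ j, fun j => ⟨fun h => hpos j ⟨j.2, h⟩, fun h => ?_⟩, ?_⟩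
    · exact hzero j fun hj => h.not_ge hj.2
    · rw [← hsum fun j hj => hzero j fun h => hj h.1, adjoint_innerFamily]

theorem coderiv_convNormal_polyhedron
    (ha : LinearIndependent ℝ fun j : {j // ⟪a j, x⟫ = c j} => a j)
    (hv : v ∈ convNormal (polyhedron a c) x)
    (hne : (coderiv (convNormal (polyhedron a c)) x v w).Nonempty) :
    coderiv (convNormal (polyhedron a c)) x v w =
      {z | ∃ γ : ι → ℝ, (∀ j, ⟪a j, x⟫ = c j ∧ 0 < ⟪a j, w⟫ → 0 ≤ γ j) ∧
        (∀ j, ¬(⟪a j, x⟫ = c j ∧ 0 ≤ ⟪a j, w⟫) → γ j = 0) ∧ z = ∑ j, γ j • a j} := by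
  have hlocal := eventuallyEq_convNormal convex_polyhedron convex_polyhedron
    (polyhedron_eventuallyEq_active hv.1)
  rw [coderiv_congr (isClosed_gph_convNormal isClosed_polyhedron)
    (isClosed_gph_convNormal isClosed_polyhedron) hlocal hv] at hne ⊢
  rw [hlocal.eq_of_nhds, convNormal_polyhedron ha] at hv
  obtain ⟨ν, hν, rfl⟩ := hv
  rw [coderiv_convNormal_polyhedron_of_active ha (fun j => j.2)
    fun j => (mem_convNormal_Iic.1 (hν j)).2.1] at hne ⊢
  obtain ⟨-, γ₀, hγ₀, -⟩ := hne
  ext z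
  rw [mem_ofPred_eq, ← mem_image_adjoint_innerFamily_active_iff]
  exact iff_of_eq (congrArg (z ∈ (innerFamily fun j : {j // ⟪a j, x⟫ = c j} => a j).adjoint '' ·)
    (Set.ext fun γ => forall_congr' fun j => and_iff_right (hγ₀ j).1))

end Polyhedra

section ParametricNormalCone

variable {X U : Type*} [NormedAddCommGroup X] [InnerProductSpace ℝ X]
  [NormedAddCommGroup U] [InnerProductSpace ℝ U]

theorem range_fstL : (WithLp.fstL 2 ℝ X U).range = ⊤ :=
  LinearMap.range_eq_top.2 fun a => ⟨pmk a 0, rfl⟩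

theorem adjoint_fstL [CompleteSpace X] [CompleteSpace U] (a : X) :
    (WithLp.fstL 2 ℝ X U).adjoint a = pmk a 0 := by
  refine ext_inner_right ℝ fun q => ?_
  rw [ContinuousLinearMap.adjoint_inner_left, inner_pmk_left, inner_zero_left, add_zero]
  rfl

theorem adjoint_eq_pmk_iff [CompleteSpace X] [CompleteSpace U] {Y : Type*} [NormedAddCommGroup Y]
    [InnerProductSpace ℝ Y] [CompleteSpace Y] {L : WithLp 2 (X × U) →L[ℝ] Y} {w : Y} {a : X}
    {b : U} :
    L.adjoint w = pmk a b ↔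
      (∀ h, ⟪a, h⟫ = ⟪w, L (pmk h 0)⟫) ∧ ∀ k, ⟪b, k⟫ = ⟪w, L (pmk 0 k)⟫ := by
  constructor
  · refine fun hab => ⟨fun h => ?_, fun k => ?_⟩
    · rw [← L.adjoint_inner_left, hab, inner_pmk_left]
      change _ = ⟪a, h⟫ + ⟪b, 0⟫
      rw [inner_zero_right, add_zero]
    · rw [← L.adjoint_inner_left, hab, inner_pmk_left]
      change _ = ⟪a, 0⟫ + ⟪b, k⟫
      rw [inner_zero_right, zero_add]
  · rintro ⟨ha, hb⟩
    refine ext_inner_right ℝ fun q => ?_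
    have hq : q = pmk (pfst q) 0 + pmk 0 (psnd q) :=
      pmk_inj.2 ⟨(add_zero (pfst q)).symm, (zero_add (psnd q)).symm⟩
    rw [inner_pmk_left, ha, hb, ← inner_add_right, ← map_add, ← hq, L.adjoint_inner_left]

variable [FiniteDimensional ℝ X] [FiniteDimensional ℝ U] {g : WithLp 2 (X × U) → X}
  {g' : WithLp 2 (X × U) →L[ℝ] X} {F : WithLp 2 (X × U) → Set X} {x ω : X} {u : U}

theorem coderiv_convNormal_add {C : Set X} (hC : IsClosed C)
    (hg : HasStrictFDerivAt g g' (pmk x u))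
    (hF : ∀ p, F p = {ω | ∃ v ∈ convNormal C (pfst p), ω = v + g p})
    (hω : ω - g (pmk x u) ∈ convNormal C x) (w : X) :
    coderiv F (pmk x u) ω w = (fun v => pmk v 0 + g'.adjoint w) ''
      coderiv (convNormal C) x (ω - g (pmk x u)) w := by
  have hF' (p : WithLp 2 (X × U)) :
      F p = {ω | ω - g p ∈ convNormal C (WithLp.fstL 2 ℝ X U p)} := by
    ext ω
    rw [hF]
    constructor
    · rintro ⟨v, hv, rfl⟩
      rwa [mem_ofPred_eq, add_sub_cancel_right]
    · exact fun h => ⟨_, h, (sub_add_cancel _ _).symm⟩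
  rw [coderiv_comp_add (isClosed_gph_convNormal hC) range_fstL hg hF' hω]
  simp only [adjoint_fstL]
  rfl

theorem statement3_general {ι : Type*} [Fintype ι] (a : ι → X) (c : ι → ℝ)
    (hg : HasStrictFDerivAt g g' (pmk x u))
    (hF : ∀ p, F p = {ω | ∃ v ∈ convNormal (polyhedron a c) (pfst p), ω = v + g p})
    (hω : ω - g (pmk x u) ∈ convNormal (polyhedron a c) x)
    (ha : LinearIndependent ℝ fun j : {j // ⟪a j, x⟫ = c j} => a j) (w : X) :
    ((coderiv (convNormal (polyhedron a c)) x (ω - g (pmk x u)) w).Nonempty →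
      coderiv F (pmk x u) ω w =
        {z | ∃ (γ : ι → ℝ) (p : X) (q : U),
          (∀ j, ⟪a j, x⟫ = c j ∧ 0 < ⟪a j, w⟫ → 0 ≤ γ j) ∧
          (∀ j, ¬(⟪a j, x⟫ = c j ∧ 0 ≤ ⟪a j, w⟫) → γ j = 0) ∧
          (∀ h, ⟪p, h⟫ = ⟪w, g' (pmk h 0)⟫) ∧ (∀ k, ⟪q, k⟫ = ⟪w, g' (pmk 0 k)⟫) ∧
          z = pmk (p + ∑ j, γ j • a j) q}) ∧
    (¬(coderiv (convNormal (polyhedron a c)) x (ω - g (pmk x u)) w).Nonempty →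
      coderiv F (pmk x u) ω w = ∅) := by
  rw [coderiv_convNormal_add isClosed_polyhedron hg hF hω]
  refine ⟨fun hne => ?_, fun hempty => by rw [not_nonempty_iff_eq_empty.1 hempty, image_empty]⟩
  rw [coderiv_convNormal_polyhedron ha hω hne]
  ext z
  constructor
  · rintro ⟨_, ⟨γ, hpos, hzero, rfl⟩, rfl⟩
    obtain ⟨p, q, hpq⟩ : ∃ p q, g'.adjoint w = pmk p q := ⟨pfst _, psnd _, rfl⟩
    obtain ⟨hp, hq⟩ := adjoint_eq_pmk_iff.1 hpq
    exact ⟨γ, p, q, hpos, hzero, hp, hq, hpq ▸ pmk_zero_add_pmk p _ q⟩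
  · rintro ⟨γ, p, q, hpos, hzero, hp, hq, rfl⟩
    exact ⟨_, ⟨γ, hpos, hzero, rfl⟩, adjoint_eq_pmk_iff.2 ⟨hp, hq⟩ ▸ pmk_zero_add_pmk p _ q⟩

end ParametricNormalCone

/-- exact coderivative formula for `F(x,u) = N(x;C) + g(x,u)` with smooth
`g` under LICQ, together with the emptiness assertion outside the coderivative domain
of the normal cone mapping. -/
theorem statement3 (n d s : ℕ)
    (xs : Fin s → Euc n) (c : Fin s → ℝ)
    (C : Set (Euc n)) (hC : C = {x | ∀ j, ⟪xs j, x⟫ ≤ c j})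
    (x : Euc n) (hx : x ∈ C)
    (u : Euc d)
    (g : WithLp 2 (Euc n × Euc d) → Euc n)
    (V : Set (WithLp 2 (Euc n × Euc d))) (hV : V ∈ nhds (pmk x u))
    (hgC1 : ContDiffOn ℝ 1 g V)
    (F : WithLp 2 (Euc n × Euc d) → Set (Euc n))
    (hF : ∀ p, F p = {ω | ∃ v ∈ convNormal C (pfst p), ω = v + g p})
    (ω : Euc n) (hω : ∃ v ∈ convNormal C x, ω = g (pmk x u) + v)
    (hLI : LinearIndependent ℝ (fun j : {j : Fin s // ⟪xs j, x⟫ = c j} => xs j)) :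
    ∀ w : Euc n,
      ((coderiv (fun y => convNormal C y) x (ω - g (pmk x u)) w).Nonempty →
        coderiv F (pmk x u) ω w =
          {z : WithLp 2 (Euc n × Euc d) | ∃ (γ : Fin s → ℝ) (a : Euc n) (b : Euc d),
            (∀ j, (⟪xs j, x⟫ = c j ∧ 0 < ⟪xs j, w⟫) → 0 ≤ γ j) ∧
            (∀ j, ¬(⟪xs j, x⟫ = c j ∧ 0 ≤ ⟪xs j, w⟫) → γ j = 0) ∧
            (∀ h : Euc n, ⟪a, h⟫ = ⟪w, fderiv ℝ g (pmk x u) (pmk h (0 : Euc d))⟫) ∧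
            (∀ k : Euc d, ⟪b, k⟫ = ⟪w, fderiv ℝ g (pmk x u) (pmk (0 : Euc n) k)⟫) ∧
            z = pmk (a + ∑ j, γ j • xs j) b}) ∧
      (¬(coderiv (fun y => convNormal C y) x (ω - g (pmk x u)) w).Nonempty →
        coderiv F (pmk x u) ω w = ∅) := by
  obtain ⟨v, hv, rfl⟩ := hω
  subst hC
  exact statement3_general xs c ((hgC1.contDiffAt hV).hasStrictFDerivAt one_ne_zero) hF
    (by rwa [add_sub_cancel_left]) hLI
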